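/- arXiv:2407.18594 — 12 statements merged into one kernel-verified Lean document; each statement's English description precedes it below -/
import Mathlib

section
/- Let X be a real inner product space, μ, η ∈ ℝ, and (γ0, γ1, γ2) ∈ ℝ³ a solution of the system S1(μ,η). Define the symmetric matrix G ∈ ℝ^{2×2} by G₁₁ = 1 − γ0², G₁₂ = G₂₁ = −γ0γ1 + (μ − η − 1)/2, G₂₂ = 1 − γ0² − γ1² + η − ημ. Then for every sequence (yⁿ)_{n∈ℤ} in X and every n: ⟪(yⁿ − yⁿ⁻¹) + μ(yⁿ⁻¹ − yⁿ⁻²), yⁿ − η·yⁿ⁻¹⟫ = ‖(yⁿ, yⁿ⁻¹)‖²_G − ‖(yⁿ⁻¹, yⁿ⁻²)‖²_G + ‖γ0·yⁿ + γ1·yⁿ⁻¹ + γ2·yⁿ⁻²‖². -/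
open scoped BigOperators RealInnerProductSpace

/-- The weighted "norm" `‖Y‖²_G = Σ_{i,j} G_{ij} ⟪y_i, y_j⟫` associated with a
matrix `G` and a tuple `Y` in a real inner product space. -/
noncomputable def gnormSq {X : Type*} [NormedAddCommGroup X] [InnerProductSpace ℝ X]
    {s : ℕ} (G : Matrix (Fin s) (Fin s) ℝ) (Y : Fin s → X) : ℝ :=
  ∑ i : Fin s, ∑ j : Fin s, G i j * ⟪Y i, Y j⟫

/-- The `k = δ = 1` reduced system `S1(μ,η)` for `(γ0, γ1, γ2)`. -/
def S1 (μ η γ0 γ1 γ2 : ℝ) : Prop :=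
  2 * γ0 * γ2 = -μ ∧
  2 * γ0 * γ1 + 2 * γ1 * γ2 = η * μ - η + μ - 1 ∧
  γ0 ^ 2 + γ1 ^ 2 + γ2 ^ 2 = 1 - η * μ + η

/-- **Summation identity for the decoupled BDF-1 scheme.**
If `(γ0,γ1,γ2)` solves `S1(μ,η)` and `G` is the associated 2×2 weighting matrix, then
for every sequence in a real inner product space the BDF-1 telescoping identity holds. -/
theorem summation_identity_bdf1
    {X : Type*} [NormedAddCommGroup X] [InnerProductSpace ℝ X]
    (μ η γ0 γ1 γ2 : ℝ) (h : S1 μ η γ0 γ1 γ2)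
    (y : ℤ → X) (n : ℤ) :
    ⟪(y n - y (n - 1)) + μ • (y (n - 1) - y (n - 2)), y n - η • y (n - 1)⟫
      = gnormSq
          !![1 - γ0 ^ 2, -(γ0 * γ1) + (μ - η - 1) / 2;
             -(γ0 * γ1) + (μ - η - 1) / 2, 1 - γ0 ^ 2 - γ1 ^ 2 + η - η * μ]
          ![y n, y (n - 1)]
        - gnormSq
            !![1 - γ0 ^ 2, -(γ0 * γ1) + (μ - η - 1) / 2;
               -(γ0 * γ1) + (μ - η - 1) / 2, 1 - γ0 ^ 2 - γ1 ^ 2 + η - η * μ]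
            ![y (n - 1), y (n - 2)]
        + ‖γ0 • y n + γ1 • y (n - 1) + γ2 • y (n - 2)‖ ^ 2 := by
  obtain ⟨h1, h2, h3⟩ := h
  rw [← real_inner_self_eq_norm_sq]
  generalize y n = a
  generalize y (n - 1) = b
  generalize y (n - 2) = c
  have hab : ⟪b, a⟫ = ⟪a, b⟫ := real_inner_comm _ _
  have hac : ⟪c, a⟫ = ⟪a, c⟫ := real_inner_comm _ _
  have hbc : ⟪c, b⟫ = ⟪b, c⟫ := real_inner_comm _ _
  simp only [gnormSq, Fin.sum_univ_two, Matrix.of_apply, Matrix.cons_val_zero,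
    Matrix.cons_val_one, Matrix.cons_val', Matrix.cons_val_fin_one,
    inner_add_left, inner_add_right, inner_sub_left, inner_sub_right,
    real_inner_smul_left, real_inner_smul_right, hab, hac, hbc]
  linear_combination (-⟪a, c⟫) * h1 - ⟪b, c⟫ * h2 - ⟪c, c⟫ * h3
end

section
/- Let 0 ≤ μ ≤ 1 and 0 ≤ η < 1. Set γ1 = √((1+η)(1−μ)/2), γ0 = −(1/2)√((1+η)(1−μ)/2) + √(μ/2 + (1+η)(1−μ)/8), and γ2 = −(1/2)√((1+η)(1−μ)/2) − √(μ/2 + (1+η)(1−μ)/8). Then (γ0, γ1, γ2) is a solution of the system S1(μ,η). -/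
/-- **Explicit solution of the `k = δ = 1` reduced system.**
For `0 ≤ μ ≤ 1` and `0 ≤ η < 1`, the explicitly given `(γ0, γ1, γ2)` solves `S1(μ,η)`. -/
theorem explicit_solution_S1 (μ η : ℝ) (hμ0 : 0 ≤ μ) (hμ1 : μ ≤ 1)
    (hη0 : 0 ≤ η) (hη1 : η < 1) :
    S1 μ η
      (-(1 / 2) * Real.sqrt ((1 + η) * (1 - μ) / 2)
        + Real.sqrt (μ / 2 + (1 + η) * (1 - μ) / 8))
      (Real.sqrt ((1 + η) * (1 - μ) / 2))
      (-(1 / 2) * Real.sqrt ((1 + η) * (1 - μ) / 2)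
        - Real.sqrt (μ / 2 + (1 + η) * (1 - μ) / 8)) := by
  have hA : 0 ≤ (1 + η) * (1 - μ) := mul_nonneg (by linarith) (by linarith)
  have ha := Real.sq_sqrt (show 0 ≤ (1 + η) * (1 - μ) / 2 by linarith)
  have hb := Real.sq_sqrt (show 0 ≤ μ / 2 + (1 + η) * (1 - μ) / 8 by linarith)
  generalize Real.sqrt ((1 + η) * (1 - μ) / 2) = a at *
  generalize Real.sqrt (μ / 2 + (1 + η) * (1 - μ) / 8) = b at *
  refine ⟨?_, ?_, ?_⟩
  · linear_combination (1 / 2) * ha - 2 * hb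
  · linear_combination (-2) * ha
  · linear_combination (3 / 2) * ha + 2 * hb
end

section
/- Let μ ∈ ℝ, η ≥ 0, and suppose (γ0, γ1, γ2) ∈ ℝ³ is a solution of the system S1(μ,η). Then γ0 + γ1 + γ2 = 0 and γ1² = (1/2)(1+η)(1−μ); in particular no real solution of S1(μ,η) exists when μ > 1. -/
/-- **Necessary conditions on solutions of `S1(μ,η)` and the weak coupling condition.**
Any real solution `(γ0,γ1,γ2)` of `S1(μ,η)` with `η ≥ 0` satisfies `γ0 + γ1 + γ2 = 0`
and `γ1² = (1/2)(1+η)(1-μ)`; in particular no real solution exists when `μ > 1`. -/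
theorem S1_necessary_conditions (μ η : ℝ) (hη : 0 ≤ η) :
    (∀ γ0 γ1 γ2 : ℝ, S1 μ η γ0 γ1 γ2 →
        γ0 + γ1 + γ2 = 0 ∧ γ1 ^ 2 = (1 / 2) * (1 + η) * (1 - μ)) ∧
    (1 < μ → ¬ ∃ γ0 γ1 γ2 : ℝ, S1 μ η γ0 γ1 γ2) := by
  have key : ∀ γ0 γ1 γ2 : ℝ, S1 μ η γ0 γ1 γ2 →
      γ0 + γ1 + γ2 = 0 ∧ γ1 ^ 2 = (1 / 2) * (1 + η) * (1 - μ) := by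
    rintro a b c ⟨h1, h2, h3⟩
    have hs : a + b + c = 0 := by
      have : (a + b + c) ^ 2 = 0 := by linear_combination h1 + h2 + h3
      exact pow_eq_zero_iff (two_ne_zero) |>.mp this
    refine ⟨hs, ?_⟩
    linear_combination b * hs - h2 / 2
  refine ⟨key, ?_⟩
  rintro hμ ⟨a, b, c, h⟩
  have h2 := (key a b c h).2
  nlinarith [sq_nonneg b, mul_nonneg hη (sub_nonneg.mpr hμ.le)]
end

section
/- Let 0 ≤ μ ≤ 1, η = 0, and let γ1 = √((1−μ)/2), γ0 = −(1/2)√((1−μ)/2) + √(μ/2 + (1−μ)/8). Define the symmetric matrix G(μ) ∈ ℝ^{2×2} by G₁₁ = 1 − γ0², G₁₂ = G₂₁ = −γ0γ1 + (μ − 1)/2, G₂₂ = 1 − γ0² − γ1². Then the eigenvalues of G(μ) are λ₁ = 1/2 + (1/4)√(1−μ)√(3μ+1) − (1/4)√((3+μ)(1−μ) + 2(1−μ)√(1−μ)√(3μ+1)) and λ₂ = 1/2 + (1/4)√(1−μ)√(3μ+1) + (1/4)√((3+μ)(1−μ) + 2(1−μ)√(1−μ)√(3μ+1)), and both λ₁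 > 0 and λ₂ > 0 for every μ ∈ [0,1]; in particular G(μ) is positive definite for every μ ∈ [0,1]. -/
open Real

/-- **Eigenvalues of the BDF-1 weighting matrix.**
For `0 ≤ μ ≤ 1` and `η = 0`, the weighting matrix `G(μ)` built from the explicit
solution of the `k = δ = 1` reduced system has the two explicitly given eigenvalues
`λ₁, λ₂` (the roots of its characteristic polynomial), both are positive on `[0,1]`,
and `G(μ)` is positive definite for every `μ ∈ [0,1]`. -/
theorem bdf1_G_eigenvalues (μ : ℝ) (hμ0 : 0 ≤ μ) (hμ1 : μ ≤ 1) :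
    let γ1 : ℝ := Real.sqrt ((1 - μ) / 2)
    let γ0 : ℝ := -(1 / 2) * Real.sqrt ((1 - μ) / 2) + Real.sqrt (μ / 2 + (1 - μ) / 8)
    let G : Matrix (Fin 2) (Fin 2) ℝ :=
      !![1 - γ0 ^ 2, -(γ0 * γ1) + (μ - 1) / 2;
         -(γ0 * γ1) + (μ - 1) / 2, 1 - γ0 ^ 2 - γ1 ^ 2]
    let lam1 : ℝ := 1 / 2 + (1 / 4) * Real.sqrt (1 - μ) * Real.sqrt (3 * μ + 1)
      - (1 / 4) * Real.sqrt ((3 + μ) * (1 - μ)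
          + 2 * (1 - μ) * Real.sqrt (1 - μ) * Real.sqrt (3 * μ + 1))
    let lam2 : ℝ := 1 / 2 + (1 / 4) * Real.sqrt (1 - μ) * Real.sqrt (3 * μ + 1)
      + (1 / 4) * Real.sqrt ((3 + μ) * (1 - μ)
          + 2 * (1 - μ) * Real.sqrt (1 - μ) * Real.sqrt (3 * μ + 1))
    (∀ lam : ℝ,
        (G - lam • (1 : Matrix (Fin 2) (Fin 2) ℝ)).det = 0 ↔ lam = lam1 ∨ lam = lam2) ∧
      0 < lam1 ∧ 0 < lam2 ∧ G.PosDef := by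
  intro γ1 γ0 G lam1 lam2
  have h2 : (0 : ℝ) ≤ 1 - μ := by linarith
  obtain ⟨a, ha⟩ : ∃ a, a = Real.sqrt (1 - μ) := ⟨_, rfl⟩
  obtain ⟨b, hb⟩ : ∃ b, b = Real.sqrt (3 * μ + 1) := ⟨_, rfl⟩
  have ha0 : 0 ≤ a := ha ▸ Real.sqrt_nonneg _
  have hb0 : 0 ≤ b := hb ▸ Real.sqrt_nonneg _
  have ha2 : a ^ 2 = 1 - μ := by rw [ha]; exact Real.sq_sqrt h2
  have hb2 : b ^ 2 = 3 * μ + 1 := by rw [hb]; exact Real.sq_sqrt (by linarith)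
  have hab : 0 ≤ a * b := mul_nonneg ha0 hb0
  obtain ⟨S, hS⟩ : ∃ S, S = Real.sqrt ((3 + μ) * (1 - μ)
          + 2 * (1 - μ) * Real.sqrt (1 - μ) * Real.sqrt (3 * μ + 1)) := ⟨_, rfl⟩
  have hS0 : 0 ≤ S := hS ▸ Real.sqrt_nonneg _
  have hS2 : S ^ 2 = (3 + μ) * (1 - μ) + 2 * (1 - μ) * (a * b) := by
    rw [hS, Real.sq_sqrt, ← ha, ← hb]
    · ring
    · rw [← ha, ← hb]
      have h3 : 0 ≤ (3 + μ) * (1 - μ) := mul_nonneg (by linarith) h2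
      have h4 : 0 ≤ 2 * (1 - μ) * a * b := by positivity
      linarith
  have hl1 : lam1 = 1 / 2 + a * b / 4 - S / 4 := by
    simp only [lam1]; rw [← hS, ← ha, ← hb]; ring
  have hl2 : lam2 = 1 / 2 + a * b / 4 + S / 4 := by
    simp only [lam2]; rw [← hS, ← ha, ← hb]; ring
  have hg1 : γ1 = a / Real.sqrt 2 := by
    simp only [γ1]; rw [Real.sqrt_div h2, ← ha]
  have h22 : Real.sqrt 2 ^ 2 = 2 := Real.sq_sqrt (by norm_num)
  have h2p : 0 < Real.sqrt 2 := Real.sqrt_pos.mpr (by norm_num)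
  have hsec : Real.sqrt (μ / 2 + (1 - μ) / 8) = b / (2 * Real.sqrt 2) := by
    rw [Real.sqrt_eq_iff_mul_self_eq (by linarith) (by positivity), ← pow_two, div_pow, mul_pow,
      h22, hb2]
    ring
  have hg0 : γ0 = (b - a) / (2 * Real.sqrt 2) := by
    have : γ0 = -(1 / 2) * γ1 + Real.sqrt (μ / 2 + (1 - μ) / 8) := rfl
    rw [this, hg1, hsec]; field_simp; ring
  have e1 : γ1 ^ 2 = (1 - μ) / 2 := by rw [hg1, div_pow, h22, ha2]
  have e0 : γ0 ^ 2 = (1 + μ - a * b) / 4 := by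
    rw [hg0, div_pow, mul_pow, h22]; linear_combination ha2 / 8 + hb2 / 8
  have e01 : γ0 * γ1 = (a * b - (1 - μ)) / 4 := by
    rw [hg0, hg1, div_mul_div_comm, mul_assoc, ← pow_two, h22]; linear_combination -ha2 / 4
  have hG : G = !![(3 - μ + a * b) / 4, -(a * b + (1 - μ)) / 4;
      -(a * b + (1 - μ)) / 4, (1 + μ + a * b) / 4] := by
    simp only [G]
    rw [e0, e1, e01]
    congr! 3 <;> ring_nf
  have hab2 : (a * b) ^ 2 = (1 - μ) * (3 * μ + 1) := by rw [mul_pow, ha2, hb2]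
  clear_value G lam1 lam2
  generalize a * b = t at *
  have hdet : 0 < (3 - μ + t) / 4 * ((1 + μ + t) / 4) - (-(t + (1 - μ)) / 4) ^ 2 := by
    nlinarith [mul_nonneg hab hμ0, mul_nonneg hμ0 h2]
  have hprod : 0 < lam1 * lam2 := by
    rw [hl1, hl2]
    nlinarith
  have hp2 : 0 < lam2 := by rw [hl2]; linarith
  have hp1 : 0 < lam1 := pos_of_mul_pos_left hprod hp2.le
  refine ⟨?_, hp1, hp2, ?_⟩
  · intro lam
    have : (G - lam • (1 : Matrix (Fin 2) (Fin 2) ℝ)).det = (lam - lam1) * (lam - lam2) := by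
      rw [hG, hl1, hl2, Matrix.det_fin_two]
      simp
      linear_combination hS2 / 16 - hab2 / 16
    rw [this, mul_eq_zero, sub_eq_zero, sub_eq_zero]
  · rw [hG]
    have hp : 0 < (3 - μ + t) / 4 := by linarith
    generalize (3 - μ + t) / 4 = p at *
    generalize (1 + μ + t) / 4 = r at *
    generalize -(t + (1 - μ)) / 4 = q at *
    refine Matrix.PosDef.of_dotProduct_mulVec_pos ?_ ?_
    · ext i j
      fin_cases i <;> fin_cases j <;> simp
    · intro x hx
      have hQ : star x ⬝ᵥ (!![p, q; q, r]).mulVec x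
          = p * x 0 ^ 2 + 2 * q * x 0 * x 1 + r * x 1 ^ 2 := by
        simp [Matrix.mulVec, dotProduct, Fin.sum_univ_two]
        ring
      rw [hQ]
      have hid : p * (p * x 0 ^ 2 + 2 * q * x 0 * x 1 + r * x 1 ^ 2)
          = (p * x 0 + q * x 1) ^ 2 + (p * r - q ^ 2) * x 1 ^ 2 := by ring
      refine pos_of_mul_pos_right (a := p) ?_ hp.le
      rw [hid]
      by_cases h1 : x 1 = 0
      · have h0 : x 0 ≠ 0 := by
          intro h0
          apply hx
          ext i
          fin_cases i <;> simp [h0, h1]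
        rw [h1]
        have : 0 < (p * x 0) ^ 2 := by positivity
        simpa using this
      · have : 0 < (p * r - q ^ 2) * x 1 ^ 2 := mul_pos hdet (by positivity)
        have := sq_nonneg (p * x 0 + q * x 1)
        linarith
end

section
/- There exist constants 0 < c_G ≤ C_G such that for every μ ∈ [0,1] there exist a symmetric positive definite matrix G ∈ ℝ^{2×2} with all eigenvalues in [c_G, C_G] and a vector γ = (γ0, γ1, γ2) ∈ ℝ³ such that for every real inner product space X, every sequence (yⁿ)_{n∈ℤ} in X, and every n: ⟪(yⁿ − yⁿ⁻¹) + μ(yⁿ⁻¹ − yⁿ⁻²), yⁿ⟫ = ‖(yⁿ, yⁿ⁻¹)‖²_G − ‖(yⁿ⁻¹, yⁿ⁻²)‖²_G + ‖γ0·yⁿ + γ1·yⁿ⁻¹ + γ2·yⁿ⁻²‖². (That is, the summation assumption with multiplier η = 0 holds for k = δ = 1 whenever the coupling strength ω ≤ 1.) -/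
open scoped BigOperators RealInnerProductSpace

lemma bdf1_aux (a b : ℝ) (hab : 1 / 16 ≤ a * b) (h0 : 0 < a + b) (h2 : a + b ≤ 2) :
    1 / 32 ≤ a ∧ a ≤ 2 := by
  have ha : 0 < a := by
    by_contra h
    have hb : 0 < b := by linarith
    nlinarith
  have hb : 0 < b := by
    by_contra h
    nlinarith
  constructor
  · nlinarith
  · linarith

/-- **The summation assumption holds for `k = δ = 1` with multiplier `η = 0`
whenever the coupling strength `ω ≤ 1`.**
There are constants `0 < c_G ≤ C_G` such that for every `μ ∈ [0,1]` there is a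
symmetric positive definite `2×2` matrix `G` with all eigenvalues in `[c_G, C_G]`,
and a vector `γ`, realizing the telescoping identity for every sequence in every
real inner product space. -/
theorem summation_assumption_bdf1 :
    ∃ cG CG : ℝ, 0 < cG ∧ cG ≤ CG ∧
      ∀ μ ∈ Set.Icc (0 : ℝ) 1,
        ∃ (G : Matrix (Fin 2) (Fin 2) ℝ) (hG : G.IsHermitian) (γ0 γ1 γ2 : ℝ),
          G.PosDef ∧
          (∀ i, hG.eigenvalues i ∈ Set.Icc cG CG) ∧
          ∀ (X : Type) (_ : NormedAddCommGroup X) (_ : InnerProductSpace ℝ X)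
            (y : ℤ → X) (n : ℤ),
            ⟪(y n - y (n - 1)) + μ • (y (n - 1) - y (n - 2)), y n⟫
              = gnormSq G ![y n, y (n - 1)] - gnormSq G ![y (n - 1), y (n - 2)]
                + ‖γ0 • y n + γ1 • y (n - 1) + γ2 • y (n - 2)‖ ^ 2 := by
  refine ⟨1 / 32, 2, by norm_num, by norm_num, ?_⟩
  rintro μ ⟨h0, h1⟩
  obtain ⟨p, hp0, hp⟩ : ∃ p : ℝ, 0 ≤ p ∧ p ^ 2 = (1 - μ) / 2 :=
    ⟨√((1 - μ) / 2), Real.sqrt_nonneg _, Real.sq_sqrt (by linarith)⟩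
  obtain ⟨q, hq0, hq⟩ : ∃ q : ℝ, 0 ≤ q ∧ q ^ 2 = (1 + 3 * μ) / 2 :=
    ⟨√((1 + 3 * μ) / 2), Real.sqrt_nonneg _, Real.sq_sqrt (by linarith)⟩
  obtain ⟨u, hu⟩ : ∃ u : ℝ, u = (p - q) / 2 := ⟨_, rfl⟩
  obtain ⟨v, hv⟩ : ∃ v : ℝ, v = (p + q) / 2 := ⟨_, rfl⟩
  have huv : u * v = -μ / 2 := by subst hu hv; linarith
  have huv2 : (u + v) ^ 2 = (1 - μ) / 2 := by subst hu hv; linarith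
  have hv4 : 1 / 4 ≤ v ^ 2 := by subst hv; nlinarith [mul_nonneg hp0 hq0]
  have hv1 : v ^ 2 - u ^ 2 ≤ 1 := by
    have : v ^ 2 - u ^ 2 = p * q := by subst hu hv; ring
    nlinarith [sq_nonneg (p - q)]
  have hG : (!![1 - u ^ 2, -(u + v) * v; -(u + v) * v, v ^ 2] :
      Matrix (Fin 2) (Fin 2) ℝ).IsHermitian := by
    ext i j
    fin_cases i <;> fin_cases j <;> simp
  have hdet := hG.det_eq_prod_eigenvalues
  have htr := hG.trace_eq_sum_eigenvalues
  simp only [Matrix.det_fin_two_of, Matrix.trace_fin_two_of, Fin.prod_univ_two,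
    Fin.sum_univ_two, RCLike.ofReal_real_eq_id, id_eq] at hdet htr
  have hdet' : (1 - u ^ 2) * v ^ 2 - -(u + v) * v * (-(u + v) * v) = (v ^ 2) ^ 2 := by
    have : 1 - u ^ 2 - (u + v) ^ 2 = v ^ 2 := by linarith
    linear_combination v ^ 2 * this
  rw [hdet'] at hdet
  have htr2 : 0 < 1 - u ^ 2 + v ^ 2 := by nlinarith [sq_nonneg (u + v)]
  have key : ∀ a b : ℝ, (v ^ 2) ^ 2 = a * b → 1 - u ^ 2 + v ^ 2 = a + b →
      1 / 32 ≤ a ∧ a ≤ 2 := by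
    intro a b hd ht
    have hab : 1 / 16 ≤ a * b := by rw [← hd]; nlinarith only [hv4]
    exact bdf1_aux a b hab (by linarith only [ht, htr2]) (by linarith only [ht, hv1])
  have hev : ∀ i, hG.eigenvalues i ∈ Set.Icc (1 / 32 : ℝ) 2 := by
    intro i
    fin_cases i
    · exact key _ _ hdet htr
    · exact key _ (hG.eigenvalues 0) (by rw [hdet]; exact mul_comm _ _)
        (by rw [htr]; exact add_comm _ _)
  refine ⟨_, hG, u, -(u + v), v, ?_, hev, ?_⟩
  · rw [hG.posDef_iff_eigenvalues_pos]
    intro i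
    exact lt_of_lt_of_le (by norm_num) (hev i).1
  · intro X _ _ y n
    generalize y n = a
    generalize y (n - 1) = b
    generalize y (n - 2) = c
    rw [← real_inner_self_eq_norm_sq]
    simp only [gnormSq, Fin.sum_univ_two, Matrix.of_apply, Matrix.cons_val_zero,
      Matrix.cons_val_one, Matrix.cons_val', Matrix.cons_val_fin_one, inner_add_left,
      inner_add_right, inner_sub_left, real_inner_smul_left, real_inner_smul_right]
    rw [real_inner_comm a b, real_inner_comm a c, real_inner_comm b c]
    linear_combination 2 * ⟪a, b⟫ * huv2 - 2 * ⟪a, c⟫ * huv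
      + ⟪b, b⟫ * (-2 * huv2 + 2 * huv)
end

section
/- Let μ ∈ ℝ, η ≥ 0, and suppose (γ0, γ1, γ2, γ3, γ4) ∈ ℝ⁵ is a solution of the system S2(μ,η). Then γ0 + γ1 + γ2 + γ3 + γ4 = 0 and (γ1 + γ3)² = (1+η)(1−3μ); in particular no real solution of S2(μ,η) exists when μ > 1/3. -/
/-- The `k = δ = 2` reduced system `S2(μ,η)` for `(γ0, γ1, γ2, γ3, γ4)`. -/
def S2 (μ η γ0 γ1 γ2 γ3 γ4 : ℝ) : Prop :=
  2 * γ0 * γ4 = -μ / 2 ∧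
  2 * γ0 * γ3 + 2 * γ1 * γ4 = (1 / 2) * η * μ + 3 * μ ∧
  2 * γ0 * γ2 + 2 * γ1 * γ3 + 2 * γ2 * γ4 = -3 * η * μ - (11 / 2) * μ + 1 / 2 ∧
  2 * γ0 * γ1 + 2 * γ1 * γ2 + 2 * γ2 * γ3 + 2 * γ3 * γ4
    = (11 / 2) * η * μ - 2 * η + 3 * μ - 2 ∧
  γ0 ^ 2 + γ1 ^ 2 + γ2 ^ 2 + γ3 ^ 2 + γ4 ^ 2 = -3 * η * μ + 2 * η + 3 / 2

/-- **Necessary conditions on solutions of `S2(μ,η)` and the weak coupling condition.**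
Any real solution of `S2(μ,η)` with `η ≥ 0` satisfies `γ0 + γ1 + γ2 + γ3 + γ4 = 0` and
`(γ1 + γ3)² = (1+η)(1-3μ)`; in particular no real solution exists when `μ > 1/3`. -/
theorem S2_necessary_conditions (μ η : ℝ) (hη : 0 ≤ η) :
    (∀ γ0 γ1 γ2 γ3 γ4 : ℝ, S2 μ η γ0 γ1 γ2 γ3 γ4 →
        γ0 + γ1 + γ2 + γ3 + γ4 = 0 ∧ (γ1 + γ3) ^ 2 = (1 + η) * (1 - 3 * μ)) ∧
    (1 / 3 < μ → ¬ ∃ γ0 γ1 γ2 γ3 γ4 : ℝ, S2 μ η γ0 γ1 γ2 γ3 γ4) := by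
  have key : ∀ γ0 γ1 γ2 γ3 γ4 : ℝ, S2 μ η γ0 γ1 γ2 γ3 γ4 →
      γ0 + γ1 + γ2 + γ3 + γ4 = 0 ∧ (γ1 + γ3) ^ 2 = (1 + η) * (1 - 3 * μ) := by
    rintro a b c d e ⟨h1, h2, h3, h4, h5⟩
    have hs : a + b + c + d + e = 0 := by
      have h : (a + b + c + d + e) ^ 2 = 0 := by
        linear_combination h1 + h2 + h3 + h4 + h5
      exact pow_eq_zero_iff (two_ne_zero) |>.mp h
    refine ⟨hs, ?_⟩
    have ha : (a - b + c - d + e) ^ 2 = 4 * ((1 + η) * (1 - 3 * μ)) := by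
      linear_combination h1 - h2 + h3 - h4 + h5
    have hb : a - b + c - d + e = -2 * (b + d) := by linear_combination hs
    rw [hb] at ha
    linear_combination ha / 4
  refine ⟨key, ?_⟩
  rintro hμ ⟨a, b, c, d, e, h⟩
  have h2 := (key a b c d e h).2
  nlinarith [sq_nonneg (b + d), mul_nonneg hη (by linarith : (0 : ℝ) ≤ 3 * μ - 1)]
end

section
/- Let 0 ≤ μ ≤ 1/3 and set θ = −(1/4)(√(5μ+1) + √(1−3μ)). Then the tuple γ0 = θ/2 + √(μ+θ²)/2, γ1 = √(1−3μ)/2 − (3μ − θ√(1−3μ))/(2√(μ+θ²)), γ2 = −(3/4)√(1−3μ) + (1/4)√(5μ+1), γ3 = √(1−3μ)/2 + (3μ − θ√(1−3μ))/(2√(μ+θ²)), γ4 = θ/2 − √(μ+θ²)/2 is a solution of the system S2(μ, 0). -/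
/-- **Explicit solution of `S2(μ,0)` for `0 ≤ μ ≤ 1/3`**, with
`θ = -(1/4)(√(5μ+1) + √(1-3μ))`. -/
theorem explicit_solution_S2 (μ : ℝ) (hμ0 : 0 ≤ μ) (hμ1 : μ ≤ 1 / 3) :
    let θ : ℝ := -(1 / 4) * (Real.sqrt (5 * μ + 1) + Real.sqrt (1 - 3 * μ))
    S2 μ 0
      (θ / 2 + Real.sqrt (μ + θ ^ 2) / 2)
      (Real.sqrt (1 - 3 * μ) / 2
        - (3 * μ - θ * Real.sqrt (1 - 3 * μ)) / (2 * Real.sqrt (μ + θ ^ 2)))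
      (-(3 / 4) * Real.sqrt (1 - 3 * μ) + (1 / 4) * Real.sqrt (5 * μ + 1))
      (Real.sqrt (1 - 3 * μ) / 2
        + (3 * μ - θ * Real.sqrt (1 - 3 * μ)) / (2 * Real.sqrt (μ + θ ^ 2)))
      (θ / 2 - Real.sqrt (μ + θ ^ 2) / 2) := by
  intro θ
  have ha : Real.sqrt (1 - 3 * μ) ^ 2 = 1 - 3 * μ := Real.sq_sqrt (by linarith)
  have hb : Real.sqrt (5 * μ + 1) ^ 2 = 5 * μ + 1 := Real.sq_sqrt (by linarith)
  have ha0 := Real.sqrt_nonneg (1 - 3 * μ)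
  have hb0 : 0 < Real.sqrt (5 * μ + 1) := Real.sqrt_pos.mpr (by linarith)
  have hθ : θ = -(1 / 4) * (Real.sqrt (5 * μ + 1) + Real.sqrt (1 - 3 * μ)) := rfl
  clear_value θ
  generalize Real.sqrt (1 - 3 * μ) = a at *
  generalize Real.sqrt (5 * μ + 1) = b at *
  have hθ0 : θ < 0 := by rw [hθ]; linarith
  have hpos : 0 < μ + θ ^ 2 := by nlinarith [mul_pos_of_neg_of_neg hθ0 hθ0]
  have hs : Real.sqrt (μ + θ ^ 2) ^ 2 = μ + θ ^ 2 := Real.sq_sqrt hpos.le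
  have hs0 : 0 < Real.sqrt (μ + θ ^ 2) := Real.sqrt_pos.mpr hpos
  generalize Real.sqrt (μ + θ ^ 2) = s at *
  -- the numerator equals `2 s²`, so the quotient is just `s`
  have hnum : 3 * μ - θ * a = 2 * s ^ 2 := by
    rw [hs, hθ]; linear_combination (1 / 8) * ha - (1 / 8) * hb
  have hq : (3 * μ - θ * a) / (2 * s) = s := by
    rw [hnum]; field_simp
  rw [hq]
  have hs' : s ^ 2 = (1 + 9 * μ + a * b) / 8 := by
    rw [hs, hθ]; linear_combination (1 / 16) * ha + (1 / 16) * hb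
  refine ⟨?_, ?_, ?_, ?_, ?_⟩
  · linear_combination (-1 / 2) * hs
  · linear_combination -hnum
  · have h : θ * (-(3 / 4) * a + (1 / 4) * b) = -(b ^ 2 - 2 * a * b - 3 * a ^ 2) / 16 := by
      rw [hθ]; ring
    linear_combination 2 * h - 2 * hs' + (7 / 8) * ha - (1 / 8) * hb
  · have h : θ * a = -(a * b + a ^ 2) / 4 := by rw [hθ]; ring
    linear_combination h - 2 * hs' - (7 / 4) * ha
  · have h : θ ^ 2 = s ^ 2 - μ := by rw [hs]; ring
    linear_combination (1 / 2) * h + 3 * hs' + (17 / 16) * ha + (1 / 16) * hb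
end

section
/- Let 0 ≤ μ ≤ 1/3 and set θ = (1/4)(√(5μ+1) − √(1−3μ)). Then the tuple γ0 = θ/2 + √(μ+θ²)/2, γ1 = √(1−3μ)/2 + (θ√(1−3μ) − 3μ)/(2√(μ+θ²)), γ2 = −(3/4)√(1−3μ) − (1/4)√(5μ+1), γ3 = √(1−3μ)/2 − (θ√(1−3μ) − 3μ)/(2√(μ+θ²)), γ4 = θ/2 − √(μ+θ²)/2 is a solution of the system S2(μ, 0). -/
/-- **A second explicit solution of `S2(μ,0)` for `0 ≤ μ ≤ 1/3`**, with
`θ = (1/4)(√(5μ+1) - √(1-3μ))`. -/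
theorem explicit_solution_S2' (μ : ℝ) (hμ0 : 0 ≤ μ) (hμ1 : μ ≤ 1 / 3) :
    let θ : ℝ := (1 / 4) * (Real.sqrt (5 * μ + 1) - Real.sqrt (1 - 3 * μ))
    S2 μ 0
      (θ / 2 + Real.sqrt (μ + θ ^ 2) / 2)
      (Real.sqrt (1 - 3 * μ) / 2
        + (θ * Real.sqrt (1 - 3 * μ) - 3 * μ) / (2 * Real.sqrt (μ + θ ^ 2)))
      (-(3 / 4) * Real.sqrt (1 - 3 * μ) - (1 / 4) * Real.sqrt (5 * μ + 1))
      (Real.sqrt (1 - 3 * μ) / 2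
        - (θ * Real.sqrt (1 - 3 * μ) - 3 * μ) / (2 * Real.sqrt (μ + θ ^ 2)))
      (θ / 2 - Real.sqrt (μ + θ ^ 2) / 2) := by
  intro θ
  have hs : Real.sqrt (1 - 3 * μ) ^ 2 = 1 - 3 * μ := Real.sq_sqrt (by linarith)
  have ht : Real.sqrt (5 * μ + 1) ^ 2 = 5 * μ + 1 := Real.sq_sqrt (by linarith)
  have hr : Real.sqrt (μ + θ ^ 2) ^ 2 = μ + θ ^ 2 := Real.sq_sqrt (by positivity)
  have hθ : θ = (1 / 4) * (Real.sqrt (5 * μ + 1) - Real.sqrt (1 - 3 * μ)) := rfl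
  clear_value θ
  generalize Real.sqrt (μ + θ ^ 2) = r at *
  generalize Real.sqrt (1 - 3 * μ) = s at *
  generalize Real.sqrt (5 * μ + 1) = t at *
  have hn : θ * s - 3 * μ = -2 * r ^ 2 := by
    rw [hr, hθ]; linear_combination (-1 / 8) * hs + (1 / 8) * ht
  have hd : (θ * s - 3 * μ) / (2 * r) = -r := by
    rw [hn]
    by_cases h : r = 0
    · simp [h]
    · field_simp
  rw [hd]
  subst hθ
  refine ⟨?_, ?_, ?_, ?_, ?_⟩
  · linear_combination (-1 / 2) * hr
  · linear_combination 2 * hr + (-1 / 8) * hs + (1 / 8) * ht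
  · grind
  · grind
  · grind
end

section
/- Let X be a real inner product space, μ, η ∈ ℝ, and (γ0,…,γ4) ∈ ℝ⁵ a solution of the system S2(μ,η). Define the symmetric matrix G ∈ ℝ^{4×4} by G = M₀ + μM₁ + ηM₂ + ημM₃ − LLᵀ, where M₀ has rows (3/2, −1, 1/4, 0), (−1, 3/2, −1, 1/4), (1/4, −1, 3/2, −1), (0, 1/4, −1, 3/2); M₁ has rows (0, 3/2, −11/4, 3/2), (3/2, 0, 3/2, −11/4), (−11/4, 3/2, 0, 3/2), (3/2, −11/4, 3/2, 0); M₂ has rows (0, −3/4, 0, 0), (−3/4, 2, −1, 0), (0, −1, 2, −1), (0, 0, −1, 2); M₃ has rows (0,0,0,0), (0, −3, 11/4, −3/2), (0, 11/4, −3, 11/4), (0, −3/2, 11/4, −3); and L is the lower-triangular Toeplitz matrix with first column (γ0, γ1, γ2, γ3). Then for every sequence (yⁿ)_{n∈ℤ} in X and every n: ⟪Dyⁿ + μ(2·Dyⁿ⁻¹ − Dyⁿ⁻²), yⁿ − η·yⁿ⁻¹⟫ = ‖(yⁿ, yⁿ⁻¹, yⁿ⁻², yⁿ⁻³)‖²_G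 − ‖(yⁿ⁻¹, yⁿ⁻², yⁿ⁻³, yⁿ⁻⁴)‖²_G + ‖Σ_{i=0}^{4} γ_i·yⁿ⁻ⁱ‖², where Dyᵐ := (3/2)yᵐ − 2yᵐ⁻¹ + (1/2)yᵐ⁻². -/
open scoped BigOperators RealInnerProductSpace

/-- **Summation identity for the decoupled BDF-2 scheme.**
If `(γ0,…,γ4)` solves `S2(μ,η)` and `G = M₀ + μM₁ + ηM₂ + ημM₃ - LLᵀ` is the associated
`4×4` weighting matrix, then for every sequence in a real inner product space the
BDF-2 telescoping identity holds, where `Dyᵐ = (3/2)yᵐ - 2yᵐ⁻¹ + (1/2)yᵐ⁻²`. -/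
theorem summation_identity_bdf2
    {X : Type*} [NormedAddCommGroup X] [InnerProductSpace ℝ X]
    (μ η γ0 γ1 γ2 γ3 γ4 : ℝ) (h : S2 μ η γ0 γ1 γ2 γ3 γ4)
    (y : ℤ → X) (n : ℤ) :
    let M0 : Matrix (Fin 4) (Fin 4) ℝ :=
      !![3/2, -1, 1/4, 0;
         -1, 3/2, -1, 1/4;
         1/4, -1, 3/2, -1;
         0, 1/4, -1, 3/2]
    let M1 : Matrix (Fin 4) (Fin 4) ℝ :=
      !![0, 3/2, -11/4, 3/2;
         3/2, 0, 3/2, -11/4;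
         -11/4, 3/2, 0, 3/2;
         3/2, -11/4, 3/2, 0]
    let M2 : Matrix (Fin 4) (Fin 4) ℝ :=
      !![0, -3/4, 0, 0;
         -3/4, 2, -1, 0;
         0, -1, 2, -1;
         0, 0, -1, 2]
    let M3 : Matrix (Fin 4) (Fin 4) ℝ :=
      !![0, 0, 0, 0;
         0, -3, 11/4, -3/2;
         0, 11/4, -3, 11/4;
         0, -3/2, 11/4, -3]
    let L : Matrix (Fin 4) (Fin 4) ℝ :=
      !![γ0, 0, 0, 0;
         γ1, γ0, 0, 0;
         γ2, γ1, γ0, 0;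
         γ3, γ2, γ1, γ0]
    let G : Matrix (Fin 4) (Fin 4) ℝ := M0 + μ • M1 + η • M2 + (η * μ) • M3 - L * L.transpose
    let D : ℤ → X := fun m =>
      (3 / 2 : ℝ) • y m - (2 : ℝ) • y (m - 1) + (1 / 2 : ℝ) • y (m - 2)
    ⟪D n + μ • ((2 : ℝ) • D (n - 1) - D (n - 2)), y n - η • y (n - 1)⟫
      = gnormSq G ![y n, y (n - 1), y (n - 2), y (n - 3)]
        - gnormSq G ![y (n - 1), y (n - 2), y (n - 3), y (n - 4)]
        + ‖γ0 • y n + γ1 • y (n - 1) + γ2 • y (n - 2) + γ3 • y (n - 3) + γ4 • y (n - 4)‖ ^ 2 := by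
  intro M0 M1 M2 M3 L G D
  obtain ⟨h1, h2, h3, h4, h5⟩ := h
  have e1 : n - 1 - 1 = n - 2 := by ring
  have e2 : n - 1 - 2 = n - 3 := by ring
  have e3 : n - 2 - 1 = n - 3 := by ring
  have e4 : n - 2 - 2 = n - 4 := by ring
  simp only [D, e1, e2, e3, e4, ← real_inner_self_eq_norm_sq]
  generalize y n = a
  generalize y (n - 1) = b
  generalize y (n - 2) = c
  generalize y (n - 3) = d
  generalize y (n - 4) = e
  simp only [gnormSq, G, M0, M1, M2, M3, L, Fin.sum_univ_four, Matrix.sub_apply, Matrix.add_apply,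
    Matrix.smul_apply, Matrix.mul_apply, Matrix.transpose_apply, smul_eq_mul]
  simp only [Matrix.of_apply, Matrix.cons_val]
  simp only [inner_add_left, inner_add_right, inner_sub_left, inner_sub_right,
    real_inner_smul_left, real_inner_smul_right]
  rw [real_inner_comm a b, real_inner_comm a c, real_inner_comm a d, real_inner_comm a e,
    real_inner_comm b c, real_inner_comm b d, real_inner_comm b e,
    real_inner_comm c d, real_inner_comm c e, real_inner_comm d e]
  linear_combination (-1) * ⟪a, e⟫ * h1 - ⟪b, e⟫ * h2 - ⟪c, e⟫ * h3 - ⟪d, e⟫ * h4 - ⟪e, e⟫ * h5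
end

section
/- There exist constants 0 < c_G ≤ C_G such that for every μ ∈ [0, 1/3] there exist a symmetric positive definite matrix G ∈ ℝ^{4×4} with all eigenvalues in [c_G, C_G] and a vector γ = (γ0,…,γ4) ∈ ℝ⁵ such that for every real inner product space X, every sequence (yⁿ)_{n∈ℤ} in X, and every n: ⟪Dyⁿ + μ(2·Dyⁿ⁻¹ − Dyⁿ⁻²), yⁿ⟫ = ‖(yⁿ, yⁿ⁻¹, yⁿ⁻², yⁿ⁻³)‖²_G − ‖(yⁿ⁻¹, yⁿ⁻², yⁿ⁻³, yⁿ⁻⁴)‖²_G + ‖Σ_{i=0}^{4} γ_i·yⁿ⁻ⁱ‖², where Dyᵐ := (3/2)yᵐ − 2yᵐ⁻¹ + (1/2)yᵐ⁻². (That is, the summation assumption with multiplier η = 0 holds for k = δ = 2 whenever the coupling strength ω ≤ 1/3.) -/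
open scoped BigOperators RealInnerProductSpace

/-- Spectral factorization of the quadratic factor. -/
lemma exists_abc (μ : ℝ) (h0 : 0 ≤ μ) (h1 : μ ≤ 1 / 3) :
    ∃ a b c : ℝ, a * c = -μ ∧ (a + c) * b = 2 * μ ∧ a ^ 2 + b ^ 2 + c ^ 2 = 1 + 3 * μ ∧
      1 / 2 ≤ c := by
  obtain ⟨P, hP1, hP⟩ : ∃ P : ℝ, 1 ≤ P ∧ P ^ 2 = 1 + 5 * μ :=
    ⟨√(1 + 5 * μ), Real.one_le_sqrt.2 (by linarith), Real.sq_sqrt (by linarith)⟩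
  obtain ⟨Q, hQ0, hQ⟩ : ∃ Q : ℝ, 0 ≤ Q ∧ Q ^ 2 = 1 - 3 * μ :=
    ⟨√(1 - 3 * μ), Real.sqrt_nonneg _, Real.sq_sqrt (by linarith)⟩
  have hS : 0 ≤ (P + Q) / 2 := by linarith
  obtain ⟨R, hR0, hR⟩ : ∃ R : ℝ, (P + Q) / 2 ≤ R ∧ R ^ 2 = ((P + Q) / 2) ^ 2 + 4 * μ :=
    ⟨√(((P + Q) / 2) ^ 2 + 4 * μ), Real.le_sqrt_of_sq_le (by linarith),
      Real.sq_sqrt (by positivity)⟩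
  refine ⟨((P + Q) / 2 - R) / 2, (P - Q) / 2, ((P + Q) / 2 + R) / 2, ?_, ?_, ?_, ?_⟩
  · linear_combination (-1 / 4) * hR
  · linear_combination (1 / 4) * hP - (1 / 4) * hQ
  · linear_combination (1 / 2) * hR + (1 / 2) * hP + (1 / 2) * hQ
  · linarith

/-- The Hankel factor of `G`. -/
def hank (g1 g2 g3 g4 : ℝ) : Matrix (Fin 4) (Fin 4) ℝ :=
  !![g1, g2, g3, g4; g2, g3, g4, 0; g3, g4, 0, 0; g4, 0, 0, 0]

lemma hank_det (g1 g2 g3 g4 : ℝ) : (hank g1 g2 g3 g4).det = g4 ^ 4 := by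
  simp [hank, Matrix.det_succ_row_zero, Fin.sum_univ_succ, Fin.succAbove]
  try ring

lemma hank_mul (g1 g2 g3 g4 : ℝ) : hank g1 g2 g3 g4 * (hank g1 g2 g3 g4).conjTranspose =
    !![g1^2+g2^2+g3^2+g4^2, g1*g2+g2*g3+g3*g4, g1*g3+g2*g4, g1*g4;
       g1*g2+g2*g3+g3*g4, g2^2+g3^2+g4^2, g2*g3+g3*g4, g2*g4;
       g1*g3+g2*g4, g2*g3+g3*g4, g3^2+g4^2, g3*g4;
       g1*g4, g2*g4, g3*g4, g4^2] := by
  ext i j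
  fin_cases i <;> fin_cases j <;>
    simp [hank, Matrix.mul_apply, Fin.sum_univ_four] <;> ring

lemma eig_bound (G : Matrix (Fin 4) (Fin 4) ℝ) (hG : G.IsHermitian) (hp : G.PosSemidef)
    (ht : G.trace ≤ 6) (hd : (1 / 4 : ℝ) ^ 8 ≤ G.det) (i : Fin 4) :
    hG.eigenvalues i ∈ Set.Icc ((1 / 4 : ℝ) ^ 8 / 6 ^ 3) 6 := by
  have hn : ∀ j, 0 ≤ hG.eigenvalues j := fun j => hp.eigenvalues_nonneg j
  have h1 := hG.trace_eq_sum_eigenvalues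
  have h2 := hG.det_eq_prod_eigenvalues
  have hle : ∀ j, hG.eigenvalues j ≤ 6 := by
    intro j
    have := Finset.single_le_sum (f := hG.eigenvalues) (fun k _ => hn k) (Finset.mem_univ j)
    simp only [RCLike.ofReal_real_eq_id, id] at h1
    linarith
  refine ⟨?_, hle i⟩
  simp only [RCLike.ofReal_real_eq_id, id] at h2
  rw [← Finset.mul_prod_erase _ _ (Finset.mem_univ i)] at h2
  have h3 : ∏ j ∈ Finset.univ.erase i, hG.eigenvalues j ≤ 6 ^ 3 := by
    refine (Finset.prod_le_prod (fun k _ => hn k) (fun k _ => hle k)).trans ?_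
    simp
  rw [div_le_iff₀ (by norm_num)]
  exact hd.trans (h2.le.trans (mul_le_mul_of_nonneg_left h3 (hn i)))

/-- **The summation assumption holds for `k = δ = 2` with multiplier `η = 0`
whenever the coupling strength `ω ≤ 1/3`.**
There are constants `0 < c_G ≤ C_G` such that for every `μ ∈ [0,1/3]` there is a
symmetric positive definite `4×4` matrix `G` with all eigenvalues in `[c_G, C_G]`,
and a vector `γ = (γ0,…,γ4)`, realizing the BDF-2 telescoping identity for every
sequence in every real inner product space, where `Dyᵐ = (3/2)yᵐ - 2yᵐ⁻¹ + (1/2)yᵐ⁻²`. -/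
theorem summation_assumption_bdf2 :
    ∃ cG CG : ℝ, 0 < cG ∧ cG ≤ CG ∧
      ∀ μ ∈ Set.Icc (0 : ℝ) (1 / 3),
        ∃ (G : Matrix (Fin 4) (Fin 4) ℝ) (hG : G.IsHermitian) (γ0 γ1 γ2 γ3 γ4 : ℝ),
          G.PosDef ∧
          (∀ i, hG.eigenvalues i ∈ Set.Icc cG CG) ∧
          ∀ (X : Type) (_ : NormedAddCommGroup X) (_ : InnerProductSpace ℝ X)
            (y : ℤ → X) (n : ℤ),
            (let D : ℤ → X := fun m =>
              (3 / 2 : ℝ) • y m - (2 : ℝ) • y (m - 1) + (1 / 2 : ℝ) • y (m - 2)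
            ⟪D n + μ • ((2 : ℝ) • D (n - 1) - D (n - 2)), y n⟫
              = gnormSq G ![y n, y (n - 1), y (n - 2), y (n - 3)]
                - gnormSq G ![y (n - 1), y (n - 2), y (n - 3), y (n - 4)]
                + ‖γ0 • y n + γ1 • y (n - 1) + γ2 • y (n - 2)
                    + γ3 • y (n - 3) + γ4 • y (n - 4)‖ ^ 2) := by
  refine ⟨(1 / 4 : ℝ) ^ 8 / 6 ^ 3, 6, by norm_num, by norm_num, ?_⟩
  rintro μ ⟨h0, h1⟩
  obtain ⟨a, b, c, e1, e2, e3, hc⟩ := exists_abc μ h0 h1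
  obtain ⟨g0, hg0⟩ : ∃ g : ℝ, g = a / 2 := ⟨_, rfl⟩
  obtain ⟨g1, hg1⟩ : ∃ g : ℝ, g = (b - 2 * a) / 2 := ⟨_, rfl⟩
  obtain ⟨g2, hg2⟩ : ∃ g : ℝ, g = (c - 2 * b + a) / 2 := ⟨_, rfl⟩
  obtain ⟨g3, hg3⟩ : ∃ g : ℝ, g = (b - 2 * c) / 2 := ⟨_, rfl⟩
  obtain ⟨g4, hg4⟩ : ∃ g : ℝ, g = c / 2 := ⟨_, rfl⟩
  have k0 : g0 ^ 2 + g1 ^ 2 + g2 ^ 2 + g3 ^ 2 + g4 ^ 2 = 3 / 2 := by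
    subst hg0 hg1 hg2 hg3 hg4
    linear_combination (3 / 2) * e3 - 2 * e2 + (1 / 2) * e1
  have k1 : g0 * g1 + g1 * g2 + g2 * g3 + g3 * g4 = (-2 + 3 * μ) / 2 := by
    subst hg0 hg1 hg2 hg3 hg4
    linear_combination (-1) * e3 + (7 / 4) * e2 - e1
  have k2 : g0 * g2 + g1 * g3 + g2 * g4 = (1 / 2 - 11 / 2 * μ) / 2 := by
    subst hg0 hg1 hg2 hg3 hg4
    linear_combination (1 / 4) * e3 - e2 + (3 / 2) * e1
  have k3 : g0 * g3 + g1 * g4 = 3 * μ / 2 := by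
    subst hg0 hg1 hg2 hg3 hg4
    linear_combination (1 / 4) * e2 - e1
  have k4 : g0 * g4 = -μ / 4 := by
    subst hg0 hg1 hg2 hg3 hg4
    linear_combination (1 / 4) * e1
  have hp := Matrix.posSemidef_self_mul_conjTranspose (hank g1 g2 g3 g4)
  have hd : (1 / 4 : ℝ) ^ 8 ≤ (hank g1 g2 g3 g4 * (hank g1 g2 g3 g4).conjTranspose).det := by
    rw [Matrix.det_mul, Matrix.det_conjTranspose, hank_det]
    simp only [star_trivial]
    rw [← pow_add]
    exact pow_le_pow_left₀ (by norm_num) (by linarith) 8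
  have ht : (hank g1 g2 g3 g4 * (hank g1 g2 g3 g4).conjTranspose).trace ≤ 6 := by
    rw [hank_mul]
    simp [Matrix.trace, Fin.sum_univ_four]
    nlinarith [sq_nonneg g0, sq_nonneg g1, sq_nonneg g2, sq_nonneg g3]
  have hb := eig_bound _ hp.1 hp ht hd
  refine ⟨_, hp.1, g0, g1, g2, g3, g4, ?_, hb, ?_⟩
  · rw [hp.1.posDef_iff_eigenvalues_pos]
    exact fun i => lt_of_lt_of_le (by norm_num) (hb i).1
  · intro X _ _ y n
    rw [hank_mul]
    have s1 : n - 1 - 1 = n - 2 := by ring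
    have s2 : n - 1 - 2 = n - 3 := by ring
    have s3 : n - 2 - 1 = n - 3 := by ring
    have s4 : n - 2 - 2 = n - 4 := by ring
    simp only [s1, s2, s3, s4, gnormSq]
    generalize y n = y0
    generalize y (n - 1) = y1
    generalize y (n - 2) = y2
    generalize y (n - 3) = y3
    generalize y (n - 4) = y4
    rw [← real_inner_self_eq_norm_sq]
    simp only [Fin.sum_univ_four, inner_add_left, inner_add_right, inner_sub_left,
      real_inner_smul_left, real_inner_smul_right]
    simp [-inner_self_eq_norm_sq_to_K]
    rw [real_inner_comm y0 y1, real_inner_comm y0 y2, real_inner_comm y0 y3,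
      real_inner_comm y0 y4, real_inner_comm y1 y2, real_inner_comm y1 y3,
      real_inner_comm y1 y4, real_inner_comm y2 y3, real_inner_comm y2 y4,
      real_inner_comm y3 y4]
    linear_combination (-⟪y0, y0⟫) * k0 - 2 * ⟪y0, y1⟫ * k1 - 2 * ⟪y0, y2⟫ * k2
      - 2 * ⟪y0, y3⟫ * k3 - 2 * ⟪y0, y4⟫ * k4
end

section
/- Let μ ∈ ℝ, η ≥ 0, and suppose (γ0,…,γ6) ∈ ℝ⁷ is a solution of the system S3(μ,η). Then γ0 + γ1 + γ2 + γ3 + γ4 + γ5 + γ6 = 0 and (γ1 + γ3 + γ5)² = (5/3)(1+η)(1−7μ); in particular no real solution of S3(μ,η) exists when μ > 1/7. -/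
/-- The `k = δ = 3` reduced system `S3(μ,η)` for `(γ0, …, γ6)`. -/
def S3 (μ η γ0 γ1 γ2 γ3 γ4 γ5 γ6 : ℝ) : Prop :=
  2 * γ0 * γ6 = -μ / 3 ∧
  2 * γ0 * γ5 + 2 * γ1 * γ6 = (1 / 3) * η * μ + (5 / 2) * μ ∧
  2 * γ0 * γ4 + 2 * γ1 * γ5 + 2 * γ2 * γ6 = -(5 / 2) * η * μ - (17 / 2) * μ ∧
  2 * γ0 * γ3 + 2 * γ1 * γ4 + 2 * γ2 * γ5 + 2 * γ3 * γ6
    = (17 / 2) * η * μ + (46 / 3) * μ - 1 / 3 ∧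
  2 * γ0 * γ2 + 2 * γ1 * γ3 + 2 * γ2 * γ4 + 2 * γ3 * γ5 + 2 * γ4 * γ6
    = -(46 / 3) * η * μ + (1 / 3) * η - (29 / 2) * μ + 3 / 2 ∧
  2 * γ0 * γ1 + 2 * γ1 * γ2 + 2 * γ2 * γ3 + 2 * γ3 * γ4 + 2 * γ4 * γ5 + 2 * γ5 * γ6
    = (29 / 2) * η * μ - (10 / 3) * η + (11 / 2) * μ - 3 ∧
  γ0 ^ 2 + γ1 ^ 2 + γ2 ^ 2 + γ3 ^ 2 + γ4 ^ 2 + γ5 ^ 2 + γ6 ^ 2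
    = -(11 / 2) * η * μ + 3 * η + 11 / 6

/-- **Necessary conditions on solutions of `S3(μ,η)` and the weak coupling condition.**
Any real solution of `S3(μ,η)` with `η ≥ 0` satisfies `γ0 + ⋯ + γ6 = 0` and
`(γ1 + γ3 + γ5)² = (5/3)(1+η)(1-7μ)`; in particular no real solution exists
when `μ > 1/7`. -/
theorem S3_necessary_conditions (μ η : ℝ) (hη : 0 ≤ η) :
    (∀ γ0 γ1 γ2 γ3 γ4 γ5 γ6 : ℝ, S3 μ η γ0 γ1 γ2 γ3 γ4 γ5 γ6 →
        γ0 + γ1 + γ2 + γ3 + γ4 + γ5 + γ6 = 0 ∧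
        (γ1 + γ3 + γ5) ^ 2 = (5 / 3) * (1 + η) * (1 - 7 * μ)) ∧
    (1 / 7 < μ → ¬ ∃ γ0 γ1 γ2 γ3 γ4 γ5 γ6 : ℝ, S3 μ η γ0 γ1 γ2 γ3 γ4 γ5 γ6) := by
  have key : ∀ γ0 γ1 γ2 γ3 γ4 γ5 γ6 : ℝ, S3 μ η γ0 γ1 γ2 γ3 γ4 γ5 γ6 →
        γ0 + γ1 + γ2 + γ3 + γ4 + γ5 + γ6 = 0 ∧
        (γ1 + γ3 + γ5) ^ 2 = (5 / 3) * (1 + η) * (1 - 7 * μ) := by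
    rintro a b c d e f g ⟨h6, h5, h4, h3, h2, h1, h0⟩
    -- the sum of all equations is the square of the total sum
    have hs : a + b + c + d + e + f + g = 0 := by
      have h : (a + b + c + d + e + f + g) ^ 2 = 0 := by
        linear_combination h0 + h1 + h2 + h3 + h4 + h5 + h6
      exact pow_eq_zero_iff (two_ne_zero) |>.mp h
    refine ⟨hs, ?_⟩
    -- the alternating sum of the equations
    have ha : (a + c + e + g - (b + d + f)) ^ 2
        = 4 * ((5 / 3) * (1 + η) * (1 - 7 * μ)) := by
      linear_combination h0 - h1 + h2 - h3 + h4 - h5 + h6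
    have hE : a + c + e + g = -(b + d + f) := by linarith
    rw [hE] at ha
    linear_combination ha / 4
  refine ⟨key, ?_⟩
  rintro hμ ⟨a, b, c, d, e, f, g, h⟩
  have h2 := (key a b c d e f g h).2
  have h3 : 0 < (1 + η) * (7 * μ - 1) := mul_pos (by linarith) (by linarith)
  nlinarith [sq_nonneg (b + d + f)]
end

section
/- There exist η ∈ [0,1) and constants 0 < c_G ≤ C_G such that for every μ ∈ [0, 1/7] there exist a symmetric positive definite matrix G ∈ ℝ^{6×6} with all eigenvalues in [c_G, C_G] and a vector γ = (γ0,…,γ6) ∈ ℝ⁷ such that for every real inner product space X, every sequence (yⁿ)_{n∈ℤ} in X, and every n: ⟪Dyⁿ + μ(3·Dyⁿ⁻¹ − 3·Dyⁿ⁻² + Dyⁿ⁻³), yⁿ − η·yⁿ⁻¹⟫ = ‖(yⁿ, yⁿ⁻¹, …, yⁿ⁻⁵)‖²_G − ‖(yⁿ⁻¹, yⁿ⁻², …, yⁿ⁻⁶)‖²_G + ‖Σ_{i=0}^{6} γ_i·yⁿ⁻ⁱ‖², where Dyᵐ := (11/6)yᵐ − 3yᵐ⁻¹ + (3/2)yᵐ⁻²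 − (1/3)yᵐ⁻³. (That is, the summation assumption holds for k = δ = 3 whenever the coupling strength ω ≤ 1/7.) -/
open scoped BigOperators RealInnerProductSpace

section SpectralFactorization

open Polynomial

/-- a root of `w + 1/w = 2x` in the closed unit disc -/
lemma exists_joukowski (x : ℂ) : ∃ w : ℂ, w ≠ 0 ∧ ‖w‖ ≤ 1 ∧ w ^ 2 + 1 = 2 * x * w := by
  obtain ⟨s, hs⟩ := IsAlgClosed.exists_pow_nat_eq (x ^ 2 - 1) (n := 2) (by norm_num)
  have h1 : (x + s) * (x - s) = 1 := by linear_combination -hs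
  have hn : ‖x + s‖ * ‖x - s‖ = 1 := by rw [← norm_mul, h1, norm_one]
  by_cases h : ‖x + s‖ ≤ 1
  · refine ⟨x + s, ?_, h, by linear_combination hs⟩
    intro h0; rw [h0] at h1; simp at h1
  · refine ⟨x - s, ?_, ?_, by linear_combination hs⟩
    · intro h0; rw [h0] at h1; simp at h1
    · push Not at h
      nlinarith [norm_nonneg (x - s)]

lemma exists_joukowski_real (r : ℝ) (hr : 1 ≤ |r|) :
    ∃ w : ℝ, w ≠ 0 ∧ |w| ≤ 1 ∧ w ^ 2 + 1 = 2 * r * w := by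
  have h2 : 0 ≤ r ^ 2 - 1 := by nlinarith [sq_abs r]
  have hs := Real.sq_sqrt h2
  set s := Real.sqrt (r ^ 2 - 1)
  have h1 : (r + s) * (r - s) = 1 := by linear_combination -hs
  have hn : |r + s| * |r - s| = 1 := by rw [← abs_mul, h1, abs_one]
  by_cases h : |r + s| ≤ 1
  · refine ⟨r + s, ?_, h, by linear_combination hs⟩
    intro h0; rw [h0] at h1; simp at h1
  · refine ⟨r - s, ?_, ?_, by linear_combination hs⟩
    · intro h0; rw [h0] at h1; simp at h1
    · push Not at h
      nlinarith [abs_nonneg (r - s)]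

/-- Spectral factorization data. -/
def SpecFac (N : ℕ) (q : ℝ[X]) : Prop :=
  ∃ (h : ℝ[X]) (A : ℝ), h.Monic ∧ h.natDegree = N ∧ 0 < A ∧
    (∀ z : ℝ, z ≠ 0 → q.eval ((z + z⁻¹) / 2) = A * h.eval z * h.eval z⁻¹) ∧
    (∀ x : ℝ, 1 ≤ x → (x - 1) ^ N ≤ h.eval x) ∧
    (∀ x : ℝ, |h.eval x| ≤ (|x| + 1) ^ N)

lemma SpecFac.mul {N M : ℕ} {p q : ℝ[X]} (hp : SpecFac N p) (hq : SpecFac M q) :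
    SpecFac (N + M) (p * q) := by
  obtain ⟨h, A, m1, d1, A1, e1, l1, u1⟩ := hp
  obtain ⟨k, B, m2, d2, B1, e2, l2, u2⟩ := hq
  refine ⟨h * k, A * B, m1.mul m2, by rw [m1.natDegree_mul m2, d1, d2], mul_pos A1 B1, ?_, ?_, ?_⟩
  · intro z hz
    rw [eval_mul, e1 z hz, e2 z hz, eval_mul, eval_mul]; ring
  · intro x hx
    rw [eval_mul, pow_add]
    have hx' : 0 ≤ x - 1 := by linarith
    exact mul_le_mul (l1 x hx) (l2 x hx) (by positivity)
      (le_trans (by positivity) (l1 x hx))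
  · intro x
    rw [eval_mul, pow_add, abs_mul]
    exact mul_le_mul (u1 x) (u2 x) (abs_nonneg _) (by positivity)

lemma specFac_const (N : ℕ) (a : ℝ) (ha : 0 < a) : SpecFac N (C a) := by
  refine ⟨X ^ N, a, monic_X_pow N, natDegree_X_pow N, ha, ?_, ?_, ?_⟩
  · intro z hz
    simp only [eval_C, eval_pow, eval_X]
    rw [mul_assoc, ← mul_pow, mul_inv_cancel₀ hz]; simp
  · intro x hx
    simp only [eval_pow, eval_X]
    exact pow_le_pow_left₀ (by linarith) (by linarith) N
  · intro x
    simp only [eval_pow, eval_X, abs_pow]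
    exact pow_le_pow_left₀ (abs_nonneg _) (by linarith) N

/-- linear factor, sign `e` with `e * r ≤ -1` -/
lemma specFac_linear (r e : ℝ) (he : e ^ 2 = 1) (hr : e * r ≤ -1) :
    SpecFac 1 (C e * (X - C r)) := by
  have har : 1 ≤ |r| := by
    have : |e| = 1 := by
      rw [← sq_abs] at he
      nlinarith [abs_nonneg e]
    have h3 : |e * r| = |r| := by rw [abs_mul, this, one_mul]
    rw [← h3, abs_of_nonpos (by linarith)]; linarith
  obtain ⟨w, w0, w1, hw⟩ := exists_joukowski_real r har
  have hwl := abs_le.mp w1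
  have hneg : e * w < 0 := by
    by_contra hcon
    push Not at hcon
    have h4 : (e * r) * (e * w) * 2 = w ^ 2 + 1 := by linear_combination (2 * r * w) * he - hw
    nlinarith [sq_nonneg w]
  have hw2 : 0 < w ^ 2 := by positivity
  refine ⟨X - C w, -(e * w) / (2 * w ^ 2), monic_X_sub_C w, natDegree_X_sub_C w, ?_, ?_, ?_, ?_⟩
  · apply div_pos <;> linarith
  · intro z hz
    simp only [eval_mul, eval_C, eval_sub, eval_X]
    field_simp
    linear_combination (e * z) * hw
  · intro x hx
    simp only [eval_sub, eval_X, eval_C, pow_one]; linarith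
  · intro x
    simp only [eval_sub, eval_X, eval_C, pow_one]
    calc |x - w| ≤ |x| + |w| := abs_sub _ _
      _ ≤ _ := by linarith

lemma specFac_quad (x : ℂ) :
    SpecFac 2 (X ^ 2 - C (2 * x.re) * X + C (‖x‖ ^ 2)) := by
  obtain ⟨w, w0, w1, hw⟩ := exists_joukowski x
  have hn : ‖w‖ ^ 2 = w.re ^ 2 + w.im ^ 2 := by
    rw [← Complex.normSq_eq_norm_sq, Complex.normSq_apply]; ring
  have hx : ‖x‖ ^ 2 = x.re ^ 2 + x.im ^ 2 := by
    rw [← Complex.normSq_eq_norm_sq, Complex.normSq_apply]; ring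
  have hpos : 0 < w.re ^ 2 + w.im ^ 2 := by rw [← hn]; positivity
  have hle : w.re ^ 2 + w.im ^ 2 ≤ 1 := by
    rw [← hn]; exact pow_le_one₀ (norm_nonneg _) w1
  have e1 := congrArg Complex.re hw
  have e2 := congrArg Complex.im hw
  simp [pow_two] at e1 e2
  set a := w.re
  set b := w.im
  set u := x.re
  set v := x.im
  have ha := abs_le.mp (le_trans (Complex.abs_re_le_norm w) w1)
  -- 2 u |w|^2 = a (|w|^2 + 1), 2 v |w|^2 = b (|w|^2 - 1)
  have f1 : 2 * u * (a ^ 2 + b ^ 2) = a * (a ^ 2 + b ^ 2 + 1) := by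
    linear_combination -a * e1 - b * e2
  have f2 : 2 * v * (a ^ 2 + b ^ 2) = b * (a ^ 2 + b ^ 2 - 1) := by
    linear_combination b * e1 - a * e2
  have hu : u = a * (a ^ 2 + b ^ 2 + 1) / (2 * (a ^ 2 + b ^ 2)) := by
    field_simp; linear_combination f1
  have hv : v = b * (a ^ 2 + b ^ 2 - 1) / (2 * (a ^ 2 + b ^ 2)) := by
    field_simp; linear_combination f2
  have hform : ∀ t : ℝ, (X ^ 2 - C (2 * a) * X + C (a ^ 2 + b ^ 2) : ℝ[X]).eval t
      = t ^ 2 - 2 * a * t + (a ^ 2 + b ^ 2) := by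
    intro t; simp
  refine ⟨X ^ 2 - C (2 * a) * X + C (a ^ 2 + b ^ 2), 1 / (4 * (a ^ 2 + b ^ 2)), ?_, ?_,
    by positivity, ?_, ?_, ?_⟩
  · monicity!
  · compute_degree!
  · intro z hz
    rw [hform, hform, hx, hu, hv]
    simp only [eval_add, eval_sub, eval_mul, eval_pow, eval_C, eval_X]
    field_simp
    ring
  · intro t ht
    rw [hform]
    nlinarith [sq_nonneg b, mul_nonneg (by linarith : (0:ℝ) ≤ t - 1) (by linarith : 0 ≤ 1 - a)]
  · intro t
    rw [hform]
    have h1 := le_abs_self t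
    have h2 := neg_abs_le t
    have h3 := sq_abs t
    have h4 : |a * t| ≤ |t| := by
      rw [abs_mul]
      have : |a| ≤ 1 := abs_le.mpr ha
      nlinarith [abs_nonneg t]
    have h5 := abs_le.mp h4
    rw [abs_le]
    constructor
    · nlinarith [sq_nonneg (t - a), sq_nonneg b, sq_nonneg (|t| + 1)]
    · nlinarith

theorem specFac_main : ∀ (N : ℕ) (q : ℝ[X]), q.natDegree ≤ N →
    (∀ c : ℝ, -1 < c → c < 1 → 0 < q.eval c) → SpecFac N q := by
  intro N
  induction N using Nat.strong_induction_on with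
  | _ N ih =>
  intro q hd hq
  have hq0 : q ≠ 0 := by
    rintro rfl
    have := hq 0 (by norm_num) (by norm_num)
    simp at this
  by_cases hc : q.natDegree = 0
  · rw [eq_C_of_natDegree_eq_zero hc]
    apply specFac_const
    have := hq 0 (by norm_num) (by norm_num)
    rw [eq_C_of_natDegree_eq_zero hc] at this
    simpa using this
  · have hdeg : (q.map (algebraMap ℝ ℂ)).degree ≠ 0 := by
      rw [degree_map]
      intro h
      exact hc (natDegree_eq_of_degree_eq_some h)
    obtain ⟨x, hx⟩ := IsAlgClosed.exists_root (q.map (algebraMap ℝ ℂ)) hdeg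
    have hx' : aeval x q = 0 := by
      rw [IsRoot.def, eval_map_algebraMap] at hx; exact hx
    by_cases him : x.im = 0
    · have hr : q.eval x.re = 0 := by
        have hxe : x = ((x.re : ℝ) : ℂ) := by apply Complex.ext <;> simp [him]
        rw [hxe] at hx'
        have := aeval_algebraMap_apply ℂ x.re q
        rw [Complex.coe_algebraMap] at this
        rw [this] at hx'
        simpa using hx'
      set r := x.re
      obtain ⟨q1, hq1⟩ := dvd_iff_isRoot.mpr hr
      have hq10 : q1 ≠ 0 := by rintro rfl; simp at hq1; exact hq0 hq1
      have hdq : q.natDegree = 1 + q1.natDegree := by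
        rw [hq1, natDegree_mul (X_sub_C_ne_zero r) hq10, natDegree_X_sub_C]
      have hr2 : r ≤ -1 ∨ 1 ≤ r := by
        by_contra hcon
        push Not at hcon
        have := hq r hcon.1 hcon.2
        linarith
      obtain ⟨e, he, her⟩ : ∃ e : ℝ, e ^ 2 = 1 ∧ e * r ≤ -1 := by
        rcases hr2 with h | h
        · exact ⟨1, by norm_num, by linarith⟩
        · exact ⟨-1, by norm_num, by linarith⟩
      have hfac : q = (C e * (X - C r)) * (C e * q1) := by
        have : (C e * C e : ℝ[X]) = 1 := by rw [← C_mul, ← pow_two, he, C_1]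
        rw [hq1]; linear_combination (-(X - C r) * q1) * this
      have h2 := ih (N - 1) (by omega) (C e * q1)
        (le_trans (natDegree_C_mul_le _ _) (by omega)) (by
          intro c h1 h2
          have h3 := hq c h1 h2
          rw [hfac, eval_mul] at h3
          refine pos_of_mul_pos_right h3 ?_ |> fun h => h
          simp only [eval_mul, eval_C, eval_sub, eval_X]
          have : |e| = 1 := by
            rw [← sq_abs] at he
            nlinarith [abs_nonneg e]
          have h4 : |e * c| ≤ 1 := by
            rw [abs_mul, this, one_mul]; exact abs_le.mpr ⟨h1.le, h2.le⟩
          have := abs_le.mp h4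
          linarith)
      have h3 := (specFac_linear r e he her).mul h2
      rw [← hfac] at h3
      rwa [show 1 + (N - 1) = N by omega] at h3
    · obtain ⟨q1, hq1⟩ := quadratic_dvd_of_aeval_eq_zero_im_ne_zero q hx' him
      have hq10 : q1 ≠ 0 := by rintro rfl; simp at hq1; exact hq0 hq1
      have hquad : (X ^ 2 - C (2 * x.re) * X + C (‖x‖ ^ 2) : ℝ[X]).natDegree = 2 := by
        compute_degree!
      have hdq : q.natDegree = 2 + q1.natDegree := by
        rw [hq1, natDegree_mul (by intro h; rw [h] at hquad; simp at hquad) hq10, hquad]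
      have h2 := ih (N - 2) (by omega) q1 (by omega) (by
          intro c h1 h2
          have h3 := hq c h1 h2
          rw [hq1, eval_mul] at h3
          refine pos_of_mul_pos_right h3 ?_
          have hx2 : ‖x‖ ^ 2 = x.re ^ 2 + x.im ^ 2 := by
            rw [← Complex.normSq_eq_norm_sq, Complex.normSq_apply]; ring
          simp only [eval_add, eval_sub, eval_mul, eval_pow, eval_C, eval_X, hx2]
          nlinarith [sq_nonneg (c - x.re), sq_nonneg x.im])
      have h3 := (specFac_quad x).mul h2
      rw [← hq1] at h3
      rwa [show 2 + (N - 2) = N by omega] at h3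

set_option maxHeartbeats 4000000 in
/-- Existence of the vector `γ` with quantitative bounds. -/
theorem exists_gamma (μ : ℝ) (h0 : 0 ≤ μ) (h1 : μ ≤ 1 / 7) :
    ∃ g0 g1 g2 g3 g4 g5 g6 : ℝ, 1 / 180 ≤ g6 ∧
      1 / 180 ≤ g0 + 2 * g1 + 4 * g2 + 8 * g3 + 16 * g4 + 32 * g5 + 64 * g6 ∧
      g0 * g0 + g1 * g1 + g2 * g2 + g3 * g3 + g4 * g4 + g5 * g5 + g6 * g6
        = 10 / 3 - 11 / 4 * μ ∧
      g0 * g1 + g1 * g2 + g2 * g3 + g3 * g4 + g4 * g5 + g5 * g6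
        = -(7 / 3) + 51 / 8 * μ ∧
      g0 * g2 + g1 * g3 + g2 * g4 + g3 * g5 + g4 * g6
        = 5 / 6 - 133 / 12 * μ ∧
      g0 * g3 + g1 * g4 + g2 * g5 + g3 * g6
        = -(1 / 6) + 235 / 24 * μ ∧
      g0 * g4 + g1 * g5 + g2 * g6 = -(39 / 8) * μ ∧
      g0 * g5 + g1 * g6 = 4 / 3 * μ ∧
      g0 * g6 = -(1 / 6) * μ := by
  set P : ℝ[X] := (1 - X) * (C (1 - 7 * μ) * (C (5 / 3) - C 2 * X + C (4 / 3) * X ^ 2)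
    + C (7 * μ) * ((1 + X) * (C (65 / 21) - C (25 / 3) * X + C (218 / 21) * X ^ 2
      - C (128 / 21) * X ^ 3 + C (32 / 21) * X ^ 4))) with hP
  have hev : ∀ c : ℝ, P.eval c = (1 - c) * ((1 - 7 * μ) * (5 / 3 - 2 * c + 4 / 3 * c ^ 2)
    + (7 * μ) * ((1 + c) * (65 / 21 - 25 / 3 * c + 218 / 21 * c ^ 2
      - 128 / 21 * c ^ 3 + 32 / 21 * c ^ 4))) := by
    intro c; simp [hP]
  have hdeg : P.natDegree ≤ 6 := by
    rw [hP]; compute_degree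
  have hpos : ∀ c : ℝ, -1 < c → c < 1 → 0 < P.eval c := by
    intro c hc1 hc2
    rw [hev]
    apply mul_pos (by linarith)
    have q0 : 0 < 5 / 3 - 2 * c + 4 / 3 * c ^ 2 := by nlinarith [sq_nonneg (c - 3 / 4)]
    have q1 : 0 < 65 / 21 - 25 / 3 * c + 218 / 21 * c ^ 2
      - 128 / 21 * c ^ 3 + 32 / 21 * c ^ 4 := by
      nlinarith [sq_nonneg (c ^ 2 - 2 * c + 1), sq_nonneg (c - 47 / 52)]
    have q2 : 0 < (1 + c) * (65 / 21 - 25 / 3 * c + 218 / 21 * c ^ 2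
      - 128 / 21 * c ^ 3 + 32 / 21 * c ^ 4) := mul_pos (by linarith) q1
    rcases eq_or_lt_of_le h0 with h | h
    · rw [← h]; linarith
    · have : 0 ≤ (1 - 7 * μ) := by linarith
      have := mul_nonneg this q0.le
      have := mul_pos (by linarith : 0 < 7 * μ) q2
      linarith
  obtain ⟨h, A, hm, hN, hA, hfac, hlow, hup⟩ := specFac_main 6 P hdeg hpos
  have h6 : h.coeff 6 = 1 := by rw [← hN]; exact hm.coeff_natDegree
  have hh : ∀ x : ℝ, h.eval x = h.coeff 0 + h.coeff 1 * x + h.coeff 2 * x ^ 2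
      + h.coeff 3 * x ^ 3 + h.coeff 4 * x ^ 4 + h.coeff 5 * x ^ 5 + x ^ 6 := by
    intro x
    rw [eval_eq_sum_range, hN]
    simp [Finset.sum_range_succ, h6]
  have hA2 : (1 / 180) ^ 2 ≤ A := by
    have e := hfac 2 (by norm_num)
    have u1 := hup 2
    have u2 := hup (2⁻¹)
    rw [hev] at e
    have habs : |A * eval 2 h * eval 2⁻¹ h| ≤ A * 3 ^ 6 * (3 / 2) ^ 6 := by
      rw [abs_mul, abs_mul, abs_of_pos hA]
      norm_num at u1 u2 ⊢
      rw [mul_assoc, mul_assoc]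
      apply mul_le_mul_of_nonneg_left _ hA.le
      have := mul_le_mul u1 u2 (abs_nonneg _) (by norm_num)
      norm_num at this ⊢
      linarith
    have := (abs_le.mp habs).1
    rw [← e] at this
    norm_num at this ⊢
    linarith
  have hs := Real.mul_self_sqrt hA.le
  have hs1 : 1 / 180 ≤ Real.sqrt A := Real.le_sqrt_of_sq_le hA2
  have hl2 := hlow 2 (by norm_num)
  rw [hh] at hl2
  generalize h.coeff 0 = k0 at *
  generalize h.coeff 1 = k1 at *
  generalize h.coeff 2 = k2 at *
  generalize h.coeff 3 = k3 at *
  generalize h.coeff 4 = k4 at *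
  generalize h.coeff 5 = k5 at *
  set s := Real.sqrt A
  have key : ∀ z : ℝ, z ≠ 0 → _ := fun z hz => by
    have := hfac z hz
    rw [hev, hh, hh, ← hs] at this
    exact this
  have z1 := key 1 (by norm_num)
  have z2 := key 2 (by norm_num)
  have z3 := key 3 (by norm_num)
  have z4 := key (-1) (by norm_num)
  have z5 := key (-2) (by norm_num)
  have z6 := key (-3) (by norm_num)
  have z7 := key 4 (by norm_num)
  clear key hh hfac hup hlow hev hpos hdeg hP
  refine ⟨s * k0, s * k1, s * k2, s * k3, s * k4, s * k5, s, hs1, ?_, ?_⟩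
  · nlinarith
  · norm_num at z2 z3 z4 z5 z6 z7
    refine ⟨?_, ?_, ?_, ?_, ?_, ?_, ?_⟩ <;> linarith

end SpectralFactorization

/-- The matrix obtained from `S` by summing along diagonals. -/
def diagSum (S : Fin 7 → Fin 7 → ℝ) : Matrix (Fin 6) (Fin 6) ℝ :=
  !![S 0 0, S 0 1, S 0 2, S 0 3, S 0 4, S 0 5;
     S 0 1, S 1 1 + S 0 0, S 1 2 + S 0 1, S 1 3 + S 0 2, S 1 4 + S 0 3, S 1 5 + S 0 4;
     S 0 2, S 1 2 + S 0 1, S 2 2 + S 1 1 + S 0 0, S 2 3 + S 1 2 + S 0 1,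
       S 2 4 + S 1 3 + S 0 2, S 2 5 + S 1 4 + S 0 3;
     S 0 3, S 1 3 + S 0 2, S 2 3 + S 1 2 + S 0 1, S 3 3 + S 2 2 + S 1 1 + S 0 0,
       S 3 4 + S 2 3 + S 1 2 + S 0 1, S 3 5 + S 2 4 + S 1 3 + S 0 2;
     S 0 4, S 1 4 + S 0 3, S 2 4 + S 1 3 + S 0 2, S 3 4 + S 2 3 + S 1 2 + S 0 1,
       S 4 4 + S 3 3 + S 2 2 + S 1 1 + S 0 0, S 4 5 + S 3 4 + S 2 3 + S 1 2 + S 0 1;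
     S 0 5, S 1 5 + S 0 4, S 2 5 + S 1 4 + S 0 3, S 3 5 + S 2 4 + S 1 3 + S 0 2,
       S 4 5 + S 3 4 + S 2 3 + S 1 2 + S 0 1, S 5 5 + S 4 4 + S 3 3 + S 2 2 + S 1 1 + S 0 0]

lemma diagSum_symm (S : Fin 7 → Fin 7 → ℝ) : (diagSum S).IsHermitian := by
  ext i j
  fin_cases i <;> fin_cases j <;> simp [diagSum, Matrix.conjTranspose_apply]

set_option maxHeartbeats 2000000 in
lemma diagSum_tele {X : Type*} [NormedAddCommGroup X] [InnerProductSpace ℝ X]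
    (S : Fin 7 → Fin 7 → ℝ)
    (d0 : S 0 0 + S 1 1 + S 2 2 + S 3 3 + S 4 4 + S 5 5 + S 6 6 = 0)
    (d1 : S 0 1 + S 1 2 + S 2 3 + S 3 4 + S 4 5 + S 5 6 = 0)
    (d2 : S 0 2 + S 1 3 + S 2 4 + S 3 5 + S 4 6 = 0)
    (d3 : S 0 3 + S 1 4 + S 2 5 + S 3 6 = 0)
    (d4 : S 0 4 + S 1 5 + S 2 6 = 0)
    (d5 : S 0 5 + S 1 6 = 0)
    (d6 : S 0 6 = 0)
    (e0 e1 e2 e3 e4 e5 e6 : X) :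
    gnormSq (diagSum S) ![e0, e1, e2, e3, e4, e5] - gnormSq (diagSum S) ![e1, e2, e3, e4, e5, e6]
    = S 0 0 * ⟪e0, e0⟫ + S 1 1 * ⟪e1, e1⟫ + S 2 2 * ⟪e2, e2⟫ + S 3 3 * ⟪e3, e3⟫
      + S 4 4 * ⟪e4, e4⟫ + S 5 5 * ⟪e5, e5⟫ + S 6 6 * ⟪e6, e6⟫
      + 2 * (S 0 1 * ⟪e0, e1⟫ + S 0 2 * ⟪e0, e2⟫ + S 0 3 * ⟪e0, e3⟫ + S 0 4 * ⟪e0, e4⟫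
        + S 0 5 * ⟪e0, e5⟫ + S 0 6 * ⟪e0, e6⟫
        + S 1 2 * ⟪e1, e2⟫ + S 1 3 * ⟪e1, e3⟫ + S 1 4 * ⟪e1, e4⟫
        + S 1 5 * ⟪e1, e5⟫ + S 1 6 * ⟪e1, e6⟫
        + S 2 3 * ⟪e2, e3⟫ + S 2 4 * ⟪e2, e4⟫ + S 2 5 * ⟪e2, e5⟫ + S 2 6 * ⟪e2, e6⟫
        + S 3 4 * ⟪e3, e4⟫ + S 3 5 * ⟪e3, e5⟫ + S 3 6 * ⟪e3, e6⟫
        + S 4 5 * ⟪e4, e5⟫ + S 4 6 * ⟪e4, e6⟫ + S 5 6 * ⟪e5, e6⟫) := by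
  simp only [gnormSq, diagSum, Fin.sum_univ_six, Matrix.of_apply, Matrix.cons_val]
  rw [real_inner_comm e0 e1, real_inner_comm e0 e2, real_inner_comm e0 e3, real_inner_comm e0 e4,
    real_inner_comm e0 e5, real_inner_comm e1 e2, real_inner_comm e1 e3,
    real_inner_comm e1 e4, real_inner_comm e1 e5, real_inner_comm e1 e6, real_inner_comm e2 e3,
    real_inner_comm e2 e4, real_inner_comm e2 e5, real_inner_comm e2 e6, real_inner_comm e3 e4,
    real_inner_comm e3 e5, real_inner_comm e3 e6, real_inner_comm e4 e5, real_inner_comm e4 e6,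
    real_inner_comm e5 e6]
  linear_combination (-⟪e6, e6⟫) * d0 - 2 * ⟪e5, e6⟫ * d1 - 2 * ⟪e4, e6⟫ * d2
    - 2 * ⟪e3, e6⟫ * d3 - 2 * ⟪e2, e6⟫ * d4 - 2 * ⟪e1, e6⟫ * d5 - 2 * ⟪e0, e6⟫ * d6

/-- Coefficients of the symmetrized quadratic form minus the square. -/
noncomputable def sForm (a b g : Fin 7 → ℝ) (i j : Fin 7) : ℝ :=
  (a i * b j + a j * b i) / 2 - g i * g j

set_option maxHeartbeats 2000000 in
lemma tele_vec {X : Type*} [NormedAddCommGroup X] [InnerProductSpace ℝ X]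
    (a0 a1 a2 a3 a4 a5 a6 g0 g1 g2 g3 g4 g5 g6 : ℝ)
    (d0 : g0 * g0 + g1 * g1 + g2 * g2 + g3 * g3 + g4 * g4 + g5 * g5 + g6 * g6
        = a0 - a1 / 2)
    (d1 : g0 * g1 + g1 * g2 + g2 * g3 + g3 * g4 + g4 * g5 + g5 * g6
        = (a1 - (a0 + a2) / 2) / 2)
    (d2 : g0 * g2 + g1 * g3 + g2 * g4 + g3 * g5 + g4 * g6 = (a2 - a3 / 2) / 2)
    (d3 : g0 * g3 + g1 * g4 + g2 * g5 + g3 * g6 = (a3 - a4 / 2) / 2)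
    (d4 : g0 * g4 + g1 * g5 + g2 * g6 = (a4 - a5 / 2) / 2)
    (d5 : g0 * g5 + g1 * g6 = (a5 - a6 / 2) / 2)
    (d6 : g0 * g6 = a6 / 2)
    (e0 e1 e2 e3 e4 e5 e6 : X) :
    ⟪a0 • e0 + a1 • e1 + a2 • e2 + a3 • e3 + a4 • e4 + a5 • e5 + a6 • e6,
      e0 - (1 / 2 : ℝ) • e1⟫ =
    gnormSq (diagSum (sForm ![a0, a1, a2, a3, a4, a5, a6] ![1, -1 / 2, 0, 0, 0, 0, 0]
        ![g0, g1, g2, g3, g4, g5, g6])) ![e0, e1, e2, e3, e4, e5]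
    - gnormSq (diagSum (sForm ![a0, a1, a2, a3, a4, a5, a6] ![1, -1 / 2, 0, 0, 0, 0, 0]
        ![g0, g1, g2, g3, g4, g5, g6])) ![e1, e2, e3, e4, e5, e6]
    + ‖g0 • e0 + g1 • e1 + g2 • e2 + g3 • e3 + g4 • e4 + g5 • e5 + g6 • e6‖ ^ 2 := by
  rw [diagSum_tele]
  · rw [← real_inner_self_eq_norm_sq]
    simp only [sForm, Matrix.cons_val, inner_add_left, inner_add_right, inner_sub_right,
      real_inner_smul_left, real_inner_smul_right]
    rw [real_inner_comm e0 e1, real_inner_comm e0 e2, real_inner_comm e0 e3,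
      real_inner_comm e0 e4, real_inner_comm e0 e5, real_inner_comm e0 e6,
      real_inner_comm e1 e2, real_inner_comm e1 e3,
      real_inner_comm e1 e4, real_inner_comm e1 e5, real_inner_comm e1 e6, real_inner_comm e2 e3,
      real_inner_comm e2 e4, real_inner_comm e2 e5, real_inner_comm e2 e6, real_inner_comm e3 e4,
      real_inner_comm e3 e5, real_inner_comm e3 e6, real_inner_comm e4 e5, real_inner_comm e4 e6,
      real_inner_comm e5 e6]
    ring
  all_goals
    simp only [sForm, Matrix.cons_val]
    linarith

lemma coef_bound (s a c x r V : ℝ) (ha : 1 / 180 ≤ a) (hr : |r| ≤ 4 * V)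
    (h : (r + a * x) ^ 2 ≤ s ^ 2) (hs : 0 ≤ s) (hc : 180 * (s + 4 * V) ≤ c) : |x| ≤ c := by
  have h1 := abs_le_of_sq_le_sq h hs
  have h2 : |a * x| ≤ s + 4 * V := by
    have : a * x = (r + a * x) - r := by ring
    rw [this]
    exact le_trans (abs_sub _ _) (by linarith)
  rw [abs_mul, abs_of_pos (by linarith)] at h2
  nlinarith [abs_nonneg x]

lemma abs_mul_le4 {c x V : ℝ} (hc : |c| ≤ 4) (hx : |x| ≤ V) : |c * x| ≤ 4 * V := by
  rw [abs_mul]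
  exact mul_le_mul hc hx (abs_nonneg _) (by norm_num)

set_option maxHeartbeats 4000000 in
/-- Lower bound for a quadratic form satisfying the telescoping identity. -/
lemma lower_bound (Q : ℝ → ℝ → ℝ → ℝ → ℝ → ℝ → ℝ) (g0 g1 g2 g3 g4 g5 g6 : ℝ)
    (h6 : 1 / 180 ≤ g6)
    (hh : 1 / 180 ≤ g0 + 2 * g1 + 4 * g2 + 8 * g3 + 16 * g4 + 32 * g5 + 64 * g6)
    (hsum : g0 * g0 + g1 * g1 + g2 * g2 + g3 * g3 + g4 * g4 + g5 * g5 + g6 * g6 ≤ 4)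
    (hom : ∀ t v0 v1 v2 v3 v4 v5, Q (t * v0) (t * v1) (t * v2) (t * v3) (t * v4) (t * v5)
      = t ^ 2 * Q v0 v1 v2 v3 v4 v5)
    (step : ∀ v0 v1 v2 v3 v4 v5, Q v0 v1 v2 v3 v4 v5 = Q (1 / 2 * v0) v0 v1 v2 v3 v4
      + (g0 * (1 / 2 * v0) + g1 * v0 + g2 * v1 + g3 * v2 + g4 * v3 + g5 * v4 + g6 * v5) ^ 2)
    (v0 v1 v2 v3 v4 v5 : ℝ) :
    v0 ^ 2 + v1 ^ 2 + v2 ^ 2 + v3 ^ 2 + v4 ^ 2 + v5 ^ 2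
      ≤ 6 * 10 ^ 40 * Q v0 v1 v2 v3 v4 v5 := by
  have b0 : |g0| ≤ 2 := abs_le_of_sq_le_sq' (by nlinarith) (by norm_num) |> abs_le.mpr
  have b1 : |g1| ≤ 2 := abs_le_of_sq_le_sq' (by nlinarith) (by norm_num) |> abs_le.mpr
  have b2 : |g2| ≤ 2 := abs_le_of_sq_le_sq' (by nlinarith) (by norm_num) |> abs_le.mpr
  have b3 : |g3| ≤ 2 := abs_le_of_sq_le_sq' (by nlinarith) (by norm_num) |> abs_le.mpr
  have b4 : |g4| ≤ 2 := abs_le_of_sq_le_sq' (by nlinarith) (by norm_num) |> abs_le.mpr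
  have b5 : |g5| ≤ 2 := abs_le_of_sq_le_sq' (by nlinarith) (by norm_num) |> abs_le.mpr
  have s1 := step v0 v1 v2 v3 v4 v5
  have s2 := step (1 / 2 * v0) v0 v1 v2 v3 v4
  have s3 := step (1 / 2 * (1 / 2 * v0)) (1 / 2 * v0) v0 v1 v2 v3
  have s4 := step (1 / 2 * (1 / 2 * (1 / 2 * v0))) (1 / 2 * (1 / 2 * v0)) (1 / 2 * v0) v0 v1 v2
  have s5 := step (1 / 2 * (1 / 2 * (1 / 2 * (1 / 2 * v0)))) (1 / 2 * (1 / 2 * (1 / 2 * v0)))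
    (1 / 2 * (1 / 2 * v0)) (1 / 2 * v0) v0 v1
  have s6 := step (1 / 2 * (1 / 2 * (1 / 2 * (1 / 2 * (1 / 2 * v0)))))
    (1 / 2 * (1 / 2 * (1 / 2 * (1 / 2 * v0)))) (1 / 2 * (1 / 2 * (1 / 2 * v0)))
    (1 / 2 * (1 / 2 * v0)) (1 / 2 * v0) v0
  rw [hom] at s6
  generalize Q v0 v1 v2 v3 v4 v5 = q0 at *
  generalize Q (1 / 2 * v0) v0 v1 v2 v3 v4 = q1 at *
  generalize Q (1 / 2 * (1 / 2 * v0)) (1 / 2 * v0) v0 v1 v2 v3 = q2 at *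
  generalize Q (1 / 2 * (1 / 2 * (1 / 2 * v0))) (1 / 2 * (1 / 2 * v0)) (1 / 2 * v0) v0 v1 v2
    = q3 at *
  generalize Q (1 / 2 * (1 / 2 * (1 / 2 * (1 / 2 * v0)))) (1 / 2 * (1 / 2 * (1 / 2 * v0)))
    (1 / 2 * (1 / 2 * v0)) (1 / 2 * v0) v0 v1 = q4 at *
  generalize Q (1 / 2 * (1 / 2 * (1 / 2 * (1 / 2 * (1 / 2 * v0)))))
    (1 / 2 * (1 / 2 * (1 / 2 * (1 / 2 * v0)))) (1 / 2 * (1 / 2 * (1 / 2 * v0)))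
    (1 / 2 * (1 / 2 * v0)) (1 / 2 * v0) v0 = q5 at *
  clear step hom
  have c0 : |g0 * (1 / 2) + g1| ≤ 4 := by
    rw [abs_le] at *; constructor <;> linarith
  have c1 : |g0 * (1 / 4) + g1 * (1 / 2) + g2| ≤ 4 := by
    rw [abs_le] at *; constructor <;> linarith
  have c2 : |g0 * (1 / 8) + g1 * (1 / 4) + g2 * (1 / 2) + g3| ≤ 4 := by
    rw [abs_le] at *; constructor <;> linarith
  have c3 : |g0 * (1 / 16) + g1 * (1 / 8) + g2 * (1 / 4) + g3 * (1 / 2) + g4| ≤ 4 := by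
    rw [abs_le] at *; constructor <;> linarith
  have c4 : |g0 * (1 / 32) + g1 * (1 / 16) + g2 * (1 / 8) + g3 * (1 / 4) + g4 * (1 / 2) + g5|
      ≤ 4 := by
    rw [abs_le] at *; constructor <;> linarith
  -- the squares
  set L1 := g0 * (1 / 2 * v0) + g1 * v0 + g2 * v1 + g3 * v2 + g4 * v3 + g5 * v4 + g6 * v5 with e1
  obtain ⟨L2, e2⟩ : ∃ L, L = (g0 * (1 / 4) + g1 * (1 / 2) + g2) * v0 + g3 * v1 + g4 * v2
    + g5 * v3 + g6 * v4 := ⟨_, rfl⟩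
  obtain ⟨L3, e3⟩ : ∃ L, L = (g0 * (1 / 8) + g1 * (1 / 4) + g2 * (1 / 2) + g3) * v0 + g4 * v1
    + g5 * v2 + g6 * v3 := ⟨_, rfl⟩
  obtain ⟨L4, e4⟩ : ∃ L, L = (g0 * (1 / 16) + g1 * (1 / 8) + g2 * (1 / 4) + g3 * (1 / 2) + g4) * v0
    + g5 * v1 + g6 * v2 := ⟨_, rfl⟩
  obtain ⟨L5, e5⟩ : ∃ L, L = (g0 * (1 / 32) + g1 * (1 / 16) + g2 * (1 / 8) + g3 * (1 / 4)
    + g4 * (1 / 2) + g5) * v0 + g6 * v1 := ⟨_, rfl⟩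
  obtain ⟨L6, e6⟩ : ∃ L, L = (g0 + 2 * g1 + 4 * g2 + 8 * g3 + 16 * g4 + 32 * g5 + 64 * g6)
    * (1 / 64 * v0) := ⟨_, rfl⟩
  have s2' : q1 = q2 + L2 ^ 2 := by rw [s2, e2]; ring
  have s3' : q2 = q3 + L3 ^ 2 := by rw [s3, e3]; ring
  have s4' : q3 = q4 + L4 ^ 2 := by rw [s4, e4]; ring
  have s5' : q4 = q5 + L5 ^ 2 := by rw [s5, e5]; ring
  have s6' : q5 = 1 / 4 * q5 + L6 ^ 2 := by
    have : L6 = g0 * (1 / 2 * (1 / 2 * (1 / 2 * (1 / 2 * (1 / 2 * (1 / 2 * v0)))))) +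
      g1 * (1 / 2 * (1 / 2 * (1 / 2 * (1 / 2 * (1 / 2 * v0))))) +
      g2 * (1 / 2 * (1 / 2 * (1 / 2 * (1 / 2 * v0)))) +
      g3 * (1 / 2 * (1 / 2 * (1 / 2 * v0))) + g4 * (1 / 2 * (1 / 2 * v0)) +
      g5 * (1 / 2 * v0) + g6 * v0 := by rw [e6]; ring
    rw [this]; linarith
  clear s2 s3 s4 s5 s6
  have p1 := sq_nonneg L1
  have p2 := sq_nonneg L2
  have p3 := sq_nonneg L3
  have p4 := sq_nonneg L4
  have p5 := sq_nonneg L5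
  have p6 := sq_nonneg L6
  have hq : 0 ≤ q0 := by linarith
  obtain ⟨s, hs, hsq⟩ : ∃ s : ℝ, 0 ≤ s ∧ s ^ 2 = q0 :=
    ⟨Real.sqrt q0, Real.sqrt_nonneg _, Real.sq_sqrt hq⟩
  have l1 : L1 ^ 2 ≤ s ^ 2 := by linarith
  have l2 : L2 ^ 2 ≤ s ^ 2 := by linarith
  have l3 : L3 ^ 2 ≤ s ^ 2 := by linarith
  have l4 : L4 ^ 2 ≤ s ^ 2 := by linarith
  have l5 : L5 ^ 2 ≤ s ^ 2 := by linarith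
  have l6 : L6 ^ 2 ≤ s ^ 2 := by linarith
  have g3' : |g3| ≤ 4 := by linarith
  have g4' : |g4| ≤ 4 := by linarith
  have g5' : |g5| ≤ 4 := by linarith
  have g2' : |g2| ≤ 4 := by linarith
  have k0 : |1 / 64 * v0| ≤ 180 * s :=
    coef_bound s _ _ _ 0 0 hh (by simp) (by rw [zero_add, ← e6]; exact l6) hs (by linarith)
  have w0 : |v0| ≤ 20000 * s := by
    rw [abs_mul] at k0; norm_num at k0; linarith
  have w1 : |v1| ≤ 2 * 10 ^ 7 * s := by
    refine coef_bound s _ _ _ _ (20000 * s) h6 (abs_mul_le4 c4 w0) (by rw [← e5]; exact l5) hs ?_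
    linarith
  have w2 : |v2| ≤ 2 * 10 ^ 10 * s := by
    refine coef_bound s _ _ _ _ (20000 * s + 2 * 10 ^ 7 * s) h6 ?_ (by rw [← e4]; exact l4) hs ?_
    · have := abs_mul_le4 c3 w0
      have := abs_mul_le4 g5' w1
      exact le_trans (abs_add_le _ _) (by linarith)
    · linarith
  have w3 : |v3| ≤ 2 * 10 ^ 13 * s := by
    refine coef_bound s _ _ _ _ (20000 * s + 2 * 10 ^ 7 * s + 2 * 10 ^ 10 * s) h6 ?_
      (by rw [← e3]; exact l3) hs ?_
    · have := abs_mul_le4 c2 w0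
      have := abs_mul_le4 g4' w1
      have := abs_mul_le4 g5' w2
      exact le_trans (abs_add_three _ _ _) (by linarith)
    · linarith
  have w4 : |v4| ≤ 2 * 10 ^ 16 * s := by
    refine coef_bound s _ _ _ _ (20000 * s + 2 * 10 ^ 7 * s + 2 * 10 ^ 10 * s + 2 * 10 ^ 13 * s)
      h6 ?_ (by rw [← e2]; exact l2) hs ?_
    · have := abs_mul_le4 c1 w0
      have := abs_mul_le4 g3' w1
      have := abs_mul_le4 g4' w2
      have := abs_mul_le4 g5' w3
      refine le_trans (abs_add_le _ _) ?_
      have := abs_add_three ((g0 * (1 / 4) + g1 * (1 / 2) + g2) * v0) (g3 * v1) (g4 * v2)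
      linarith
    · linarith
  have w5 : |v5| ≤ 2 * 10 ^ 19 * s := by
    refine coef_bound s g6 _ _ ((g0 * (1 / 2) + g1) * v0 + g2 * v1 + g3 * v2 + g4 * v3 + g5 * v4)
      (20000 * s + 2 * 10 ^ 7 * s + 2 * 10 ^ 10 * s + 2 * 10 ^ 13 * s + 2 * 10 ^ 16 * s)
      h6 ?_ ?_ hs ?_
    · have := abs_mul_le4 c0 w0
      have := abs_mul_le4 g2' w1
      have := abs_mul_le4 g3' w2
      have := abs_mul_le4 g4' w3
      have := abs_mul_le4 g5' w4
      refine le_trans (abs_add_three _ _ _) ?_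
      have := abs_add_three ((g0 * (1 / 2) + g1) * v0) (g2 * v1) (g3 * v2)
      linarith
    · refine le_trans (le_of_eq ?_) l1
      rw [e1]; ring
    · linarith
  have fin : ∀ v : ℝ, |v| ≤ 10 ^ 20 * s → v ^ 2 ≤ 10 ^ 40 * q0 := by
    intro v hv
    rw [← hsq, ← sq_abs]
    calc |v| ^ 2 ≤ (10 ^ 20 * s) ^ 2 := pow_le_pow_left₀ (abs_nonneg _) hv 2
      _ = _ := by ring
  have := fin v0 (by linarith)
  have := fin v1 (by linarith)
  have := fin v2 (by linarith)
  have := fin v3 (by linarith)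
  have := fin v4 (by linarith)
  have := fin v5 (by linarith)
  linarith

lemma inner_real_mul (a b : ℝ) : ⟪a, b⟫ = a * b := by
  simp [mul_comm]

lemma eig_lower (G : Matrix (Fin 6) (Fin 6) ℝ) (hG : G.IsHermitian) (K : ℝ) (hK : 0 < K)
    (h : ∀ v0 v1 v2 v3 v4 v5 : ℝ, v0 ^ 2 + v1 ^ 2 + v2 ^ 2 + v3 ^ 2 + v4 ^ 2 + v5 ^ 2
      ≤ K * gnormSq G ![v0, v1, v2, v3, v4, v5]) (i : Fin 6) : 1 / K ≤ hG.eigenvalues i := by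
  rw [hG.eigenvalues_eq]
  have hn : ‖hG.eigenvectorBasis i‖ = 1 := hG.eigenvectorBasis.orthonormal.1 i
  generalize hG.eigenvectorBasis i = v at hn
  have hn2 : ‖v‖ ^ 2 = 1 := by rw [hn]; norm_num
  rw [EuclideanSpace.norm_sq_eq, Fin.sum_univ_six] at hn2
  simp only [Real.norm_eq_abs, sq_abs] at hn2
  have hv := h (v 0) (v 1) (v 2) (v 3) (v 4) (v 5)
  rw [hn2] at hv
  have hE : RCLike.re (dotProduct (star ⇑v) (G.mulVec ⇑v))
      = gnormSq G ![v 0, v 1, v 2, v 3, v 4, v 5] := by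
    simp only [gnormSq, dotProduct, Matrix.mulVec, Fin.sum_univ_six, Matrix.cons_val,
      Pi.star_apply, star_trivial, inner_real_mul, RCLike.re_to_real]
    ring
  rw [hE, div_le_iff₀ hK]
  linarith

/-- **The summation assumption holds for `k = δ = 3` whenever the coupling
strength `ω ≤ 1/7`.**
There are a multiplier `η ∈ [0,1)` and constants `0 < c_G ≤ C_G` such that for every
`μ ∈ [0,1/7]` there is a symmetric positive definite `6×6` matrix `G` with all
eigenvalues in `[c_G, C_G]`, and a vector `γ = (γ0,…,γ6)`, realizing the BDF-3
telescoping identity for every sequence in every real inner product space, where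
`Dyᵐ = (11/6)yᵐ - 3yᵐ⁻¹ + (3/2)yᵐ⁻² - (1/3)yᵐ⁻³`. -/
theorem summation_assumption_bdf3 :
    ∃ η : ℝ, 0 ≤ η ∧ η < 1 ∧
    ∃ cG CG : ℝ, 0 < cG ∧ cG ≤ CG ∧
      ∀ μ ∈ Set.Icc (0 : ℝ) (1 / 7),
        ∃ (G : Matrix (Fin 6) (Fin 6) ℝ) (hG : G.IsHermitian) (γ0 γ1 γ2 γ3 γ4 γ5 γ6 : ℝ),
          G.PosDef ∧
          (∀ i, hG.eigenvalues i ∈ Set.Icc cG CG) ∧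
          ∀ (X : Type) (_ : NormedAddCommGroup X) (_ : InnerProductSpace ℝ X)
            (y : ℤ → X) (n : ℤ),
            (let D : ℤ → X := fun m =>
              (11 / 6 : ℝ) • y m - (3 : ℝ) • y (m - 1)
                + (3 / 2 : ℝ) • y (m - 2) - (1 / 3 : ℝ) • y (m - 3)
            ⟪D n + μ • ((3 : ℝ) • D (n - 1) - (3 : ℝ) • D (n - 2) + D (n - 3)),
                y n - η • y (n - 1)⟫
              = gnormSq G ![y n, y (n - 1), y (n - 2), y (n - 3), y (n - 4), y (n - 5)]
                - gnormSq G ![y (n - 1), y (n - 2), y (n - 3), y (n - 4), y (n - 5), y (n - 6)]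
                + ‖γ0 • y n + γ1 • y (n - 1) + γ2 • y (n - 2) + γ3 • y (n - 3)
                    + γ4 • y (n - 4) + γ5 • y (n - 5) + γ6 • y (n - 6)‖ ^ 2) := by
  refine ⟨1 / 2, by norm_num, by norm_num, 1 / (6 * 10 ^ 40), 100, by positivity, by norm_num, ?_⟩
  rintro μ ⟨hμ0, hμ1⟩
  obtain ⟨g0, g1, g2, g3, g4, g5, g6, h6, hh, d0, d1, d2, d3, d4, d5, d6⟩ :=
    exists_gamma μ hμ0 hμ1
  obtain ⟨a0, ha0⟩ : ∃ a : ℝ, a = 11 / 6 := ⟨_, rfl⟩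
  obtain ⟨a1, ha1⟩ : ∃ a : ℝ, a = -3 + 11 / 2 * μ := ⟨_, rfl⟩
  obtain ⟨a2, ha2⟩ : ∃ a : ℝ, a = 3 / 2 - 29 / 2 * μ := ⟨_, rfl⟩
  obtain ⟨a3, ha3⟩ : ∃ a : ℝ, a = -(1 / 3) + 46 / 3 * μ := ⟨_, rfl⟩
  obtain ⟨a4, ha4⟩ : ∃ a : ℝ, a = -(17 / 2) * μ := ⟨_, rfl⟩
  obtain ⟨a5, ha5⟩ : ∃ a : ℝ, a = 5 / 2 * μ := ⟨_, rfl⟩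
  obtain ⟨a6, ha6⟩ : ∃ a : ℝ, a = -(1 / 3) * μ := ⟨_, rfl⟩
  have tele := fun (X : Type) (i1 : NormedAddCommGroup X) (i2 : InnerProductSpace ℝ X) =>
    tele_vec (X := X) a0 a1 a2 a3 a4 a5 a6 g0 g1 g2 g3 g4 g5 g6
      (by rw [d0, ha0, ha1]; ring) (by rw [d1, ha0, ha1, ha2]; ring)
      (by rw [d2, ha2, ha3]; ring) (by rw [d3, ha3, ha4]; ring) (by rw [d4, ha4, ha5]; ring)
      (by rw [d5, ha5, ha6]; ring) (by rw [d6, ha6]; ring)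
  have htr : (diagSum (sForm ![a0, a1, a2, a3, a4, a5, a6] ![1, -1 / 2, 0, 0, 0, 0, 0]
        ![g0, g1, g2, g3, g4, g5, g6])).trace ≤ 100 := by
    simp only [Matrix.trace, Matrix.diag, Fin.sum_univ_six, diagSum, sForm, Matrix.of_apply,
      Matrix.cons_val]
    nlinarith [mul_self_nonneg g0, mul_self_nonneg g1, mul_self_nonneg g2, mul_self_nonneg g3,
      mul_self_nonneg g4, mul_self_nonneg g5]
  have hG := diagSum_symm (sForm ![a0, a1, a2, a3, a4, a5, a6] ![1, -1 / 2, 0, 0, 0, 0, 0]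
        ![g0, g1, g2, g3, g4, g5, g6])
  generalize diagSum (sForm ![a0, a1, a2, a3, a4, a5, a6] ![1, -1 / 2, 0, 0, 0, 0, 0]
        ![g0, g1, g2, g3, g4, g5, g6]) = G at *
  have low : ∀ i, 1 / (6 * 10 ^ 40) ≤ hG.eigenvalues i := by
    apply eig_lower G hG _ (by positivity)
    refine lower_bound (fun v0 v1 v2 v3 v4 v5 => gnormSq G ![v0, v1, v2, v3, v4, v5])
      g0 g1 g2 g3 g4 g5 g6 h6 hh (by rw [d0]; linarith) ?_ ?_
    · intro t v0 v1 v2 v3 v4 v5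
      simp only [gnormSq, Fin.sum_univ_six, Matrix.cons_val, inner_real_mul]
      ring
    · intro v0 v1 v2 v3 v4 v5
      have := tele ℝ inferInstance inferInstance (1 / 2 * v0) v0 v1 v2 v3 v4 v5
      simp only [smul_eq_mul, sub_self, inner_zero_right, Real.norm_eq_abs, sq_abs] at this
      linarith
  have pos : ∀ i, 0 < hG.eigenvalues i := fun i => lt_of_lt_of_le (by positivity) (low i)
  refine ⟨G, hG, g0, g1, g2, g3, g4, g5, g6, hG.posDef_iff_eigenvalues_pos.mpr pos, ?_, ?_⟩
  · intro i
    refine ⟨low i, ?_⟩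
    have h1 := hG.trace_eq_sum_eigenvalues
    simp only [RCLike.ofReal_real_eq_id, id] at h1
    have h2 := Finset.single_le_sum (f := hG.eigenvalues) (fun j _ => (pos j).le)
      (Finset.mem_univ i)
    linarith
  · intro X i1 i2 y n
    intro D
    rw [← tele X i1 i2]
    congr 1
    simp only [D, sub_sub]
    norm_num only
    rw [ha0, ha1, ha2, ha3, ha4, ha5, ha6]
    module
end
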